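/- arXiv:1811.03962 — 2 statements merged into one kernel-verified Lean document; each statement's English description precedes it below -/
import Mathlib

section
/- (δ-separateness propagates through the layers.) There exists an absolute constant C > 1 such that: if δ ≤ 1/(C L), m ≥ C·L·log(n·L)/δ⁶, ‖x_i‖ = 1 for every i ∈ [n], and ‖x_i − x_j‖ ≥ δ for every pair i ≠ j, then with probability at least 1 − e^{−δ⁶·m/(C·L)} over the random matrices A and W_1,…,W_L, for all i ≠ j ∈ [n] and all ℓ ∈ {0, 1, …, L}: ‖(I − h_{i,ℓ} h_{i,ℓ}ᵀ/‖h_{i,ℓ}‖²)·h_{j,ℓ}‖ ≥ δ/2. -/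
/-!
Fix two samples and write `N`, `N'` for the squared norms of their layer vectors and `D` for the
squared distance between them. Conditionally on the previous layers, a layer `u ↦ relu (M u)` with
i.i.d. `N(0, 2/m)` entries makes the new `N`, `N'`, `D` sums of `m` i.i.d. row contributions.

* The squared norm is preserved in mean. The moment generating function of the square of a
  rectified Gaussian is explicit (`gauss_relu_mgf`), so a Chernoff bound gives a deviation of at
  most `δ³` outside an event of probability `exp (-Ω(δ⁶ m))` (`step_norm`).
* With `a = ⟨w, u⟩` and `b = ⟨w, v⟩` for a row `w`, averaging over `w` and `-w` shows that the mean
  of `(a⁺ - b⁺)²` is half of `E (a - b)²` minus the mean of the cross loss `(-ab)⁺`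
  (`rowDist_integral`). The cross loss is supported on sign disagreement, which forces `|a|` to be
  small compared with the part of `b` independent of `a`; hence its mean is cubic in the distance
  when the vectors are close (`crossLoss_integral_cubic`). In general it costs at most half of
  `D`. So `D` drops by only `O(δ³)`, or else remains above `δ²` (`step_dist`, `step_prob`).

Since `δ ≤ 1/(C L)`, the accumulated loss `O(L δ³)` is a small fraction of `δ²`, so at every layer
`N` and `N'` differ from `1` by a small fraction of `δ²`, and `D ≥ 0.9 δ²` (`good_layers`). The identity
`4 Q N = 2 D (N + N') - D² - (N - N')²` for the squared residual `Q` then yields `Q ≥ δ²/4`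
(`residual_bound`). The failure probabilities are combined by Fubini over the weights of one layer
(`badInput_prob`, `badStep_prob`) and a union bound over pairs and layers, which the lower bound on
`m` absorbs (`union_numeric`).
-/

open MeasureTheory ProbabilityTheory

noncomputable section

namespace DNNPaper

/-! ### Elementary linear algebra on plain function matrices -/

def mulVec {p q : ℕ} (M : Fin p → Fin q → ℝ) (v : Fin q → ℝ) : Fin p → ℝ :=
  fun i => ∑ j, M i j * v j

def mmul {p q r : ℕ} (M : Fin p → Fin q → ℝ) (N : Fin q → Fin r → ℝ) :
    Fin p → Fin r → ℝ :=
  fun i k => ∑ j, M i j * N j k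

def transpose {p q : ℕ} (M : Fin p → Fin q → ℝ) : Fin q → Fin p → ℝ :=
  fun j i => M i j

def dot {p : ℕ} (u v : Fin p → ℝ) : ℝ := ∑ i, u i * v i

def outer {p q : ℕ} (u : Fin p → ℝ) (v : Fin q → ℝ) : Fin p → Fin q → ℝ :=
  fun i j => u i * v j

def idMat (p : ℕ) : Fin p → Fin p → ℝ := fun i j => if i = j then 1 else 0

def diagMat {p : ℕ} (dg : Fin p → ℝ) : Fin p → Fin p → ℝ :=
  fun i j => if i = j then dg i else 0

def relu {p : ℕ} (v : Fin p → ℝ) : Fin p → ℝ := fun k => max (v k) 0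

/-- diagonal entries of the ReLU sign matrix of a pre-activation vector -/
def signOf {p : ℕ} (g : Fin p → ℝ) : Fin p → ℝ := fun k => if 0 ≤ g k then 1 else 0

/-- Euclidean norm -/
def l2 {p : ℕ} (v : Fin p → ℝ) : ℝ := Real.sqrt (∑ k, v k ^ 2)

/-- max-norm -/
def linf {p : ℕ} (v : Fin p → ℝ) : ℝ := ⨆ k, |v k|

/-- number of nonzero entries -/
def l0 {p : ℕ} (v : Fin p → ℝ) : ℕ := (Finset.univ.filter fun k => v k ≠ 0).card

/-- Frobenius norm -/
def frob {p q : ℕ} (M : Fin p → Fin q → ℝ) : ℝ := Real.sqrt (∑ i, ∑ j, M i j ^ 2)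

/-- spectral norm (ℓ₂ operator norm) -/
def spec {p q : ℕ} (M : Fin p → Fin q → ℝ) : ℝ :=
  sSup {r | ∃ v : Fin q → ℝ, l2 v ≤ 1 ∧ r = l2 (mulVec M v)}

/-- trace (Frobenius) inner product -/
def innerF {p q : ℕ} (M N : Fin p → Fin q → ℝ) : ℝ := ∑ i, ∑ j, M i j * N i j

/-- `‖W‖₂ = max_ℓ ‖W_ℓ‖₂` for a tuple of matrices -/
def tupleSpec {m L : ℕ} (W : Fin L → Fin m → Fin m → ℝ) : ℝ := ⨆ ℓ, spec (W ℓ)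

/-! ### The network -/

variable {𝔡 m d L : ℕ}

/-- `Wat W ℓ` is the weight matrix of layer `ℓ ∈ {1,…,L}` (identity outside this range). -/
def Wat (W : Fin L → Fin m → Fin m → ℝ) (ℓ : ℕ) : Fin m → Fin m → ℝ :=
  if h : 1 ≤ ℓ ∧ ℓ ≤ L then W ⟨ℓ - 1, by omega⟩ else idMat m

/-- the forward (post-activation) vectors `h_ℓ`, `ℓ = 0,1,…,L` -/
def hseq (A : Fin m → Fin 𝔡 → ℝ) (W : Fin L → Fin m → Fin m → ℝ) (x : Fin 𝔡 → ℝ) :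
    ℕ → Fin m → ℝ
  | 0 => relu (mulVec A x)
  | ℓ + 1 =>
      if ℓ + 1 ≤ L then relu (mulVec (Wat W (ℓ + 1)) (hseq A W x ℓ)) else hseq A W x ℓ

/-- the pre-activation vectors `g_ℓ`, `ℓ = 0,1,…,L` -/
def gseq (A : Fin m → Fin 𝔡 → ℝ) (W : Fin L → Fin m → Fin m → ℝ) (x : Fin 𝔡 → ℝ) :
    ℕ → Fin m → ℝ
  | 0 => mulVec A x
  | ℓ + 1 => mulVec (Wat W (ℓ + 1)) (hseq A W x ℓ)

/-- `chainProd W Dfun a b = (D_b W_b) (D_{b-1} W_{b-1}) ⋯ (D_a W_a)` where `D_ℓ` is the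
diagonal matrix with entries `Dfun ℓ`; it is the identity when `b < a`, and factors with
index outside `{1,…,L}` are skipped. -/
def chainProd (W : Fin L → Fin m → Fin m → ℝ) (Dfun : ℕ → Fin m → ℝ) (a : ℕ) :
    ℕ → Fin m → Fin m → ℝ
  | 0 => idMat m
  | b + 1 =>
      if a ≤ b + 1 ∧ b + 1 ≤ L then
        mmul (mmul (diagMat (Dfun (b + 1))) (Wat W (b + 1))) (chainProd W Dfun a b)
      else chainProd W Dfun a b

/-- `prodDW A W x a b = D_b W_b D_{b-1} W_{b-1} ⋯ D_a W_a` with the sign matrices of input `x` -/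
def prodDW (A : Fin m → Fin 𝔡 → ℝ) (W : Fin L → Fin m → Fin m → ℝ) (x : Fin 𝔡 → ℝ)
    (a b : ℕ) : Fin m → Fin m → ℝ :=
  chainProd W (fun ℓ => signOf (gseq A W x ℓ)) a b

/-- `Back_ℓ = B D_L W_L ⋯ D_ℓ W_ℓ` (equal to `B` for `ℓ = L+1`) -/
def backMat (B : Fin d → Fin m → ℝ) (A : Fin m → Fin 𝔡 → ℝ)
    (W : Fin L → Fin m → Fin m → ℝ) (x : Fin 𝔡 → ℝ) (ℓ : ℕ) : Fin d → Fin m → ℝ :=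
  mmul B (prodDW A W x ℓ L)

/-- formula gradient w.r.t. `W_ℓ` with an arbitrary (fake) loss vector `v`:
`D_ℓ (Back_{ℓ+1}ᵀ v) h_{ℓ-1}ᵀ` -/
def gradW (B : Fin d → Fin m → ℝ) (A : Fin m → Fin 𝔡 → ℝ)
    (W : Fin L → Fin m → Fin m → ℝ) (x : Fin 𝔡 → ℝ) (v : Fin d → ℝ) (ℓ : ℕ) :
    Fin m → Fin m → ℝ :=
  outer (mulVec (diagMat (signOf (gseq A W x ℓ)))
      (mulVec (transpose (backMat B A W x (ℓ + 1))) v))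
    (hseq A W x (ℓ - 1))

/-- loss vector `B h_L − y` -/
def lossVec (B : Fin d → Fin m → ℝ) (A : Fin m → Fin 𝔡 → ℝ)
    (W : Fin L → Fin m → Fin m → ℝ) (x : Fin 𝔡 → ℝ) (y : Fin d → ℝ) : Fin d → ℝ :=
  fun j => mulVec B (hseq A W x L) j - y j

/-- per-sample ℓ₂ regression loss `F_i` -/
def objFi (B : Fin d → Fin m → ℝ) (A : Fin m → Fin 𝔡 → ℝ)
    (W : Fin L → Fin m → Fin m → ℝ) (x : Fin 𝔡 → ℝ) (y : Fin d → ℝ) : ℝ :=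
  (1 / 2) * l2 (lossVec B A W x y) ^ 2

/-- total objective `F` -/
def objF {n : ℕ} (B : Fin d → Fin m → ℝ) (A : Fin m → Fin 𝔡 → ℝ)
    (W : Fin L → Fin m → Fin m → ℝ) (x : Fin n → Fin 𝔡 → ℝ)
    (y : Fin n → Fin d → ℝ) : ℝ :=
  ∑ i, objFi B A W (x i) (y i)

/-- formula gradient of the total objective w.r.t. `W_ℓ` -/
def gradF {n : ℕ} (B : Fin d → Fin m → ℝ) (A : Fin m → Fin 𝔡 → ℝ)
    (W : Fin L → Fin m → Fin m → ℝ) (x : Fin n → Fin 𝔡 → ℝ)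
    (y : Fin n → Fin d → ℝ) (ℓ : ℕ) : Fin m → Fin m → ℝ :=
  ∑ i, gradW B A W (x i) (lossVec B A W (x i) (y i)) ℓ

/-! ### Random initialization -/

/-- a `p × q` random matrix with i.i.d. `N(0, v)` entries -/
def gaussMat (p q : ℕ) (v : NNReal) : Measure (Fin p → Fin q → ℝ) :=
  Measure.pi fun _ => Measure.pi fun _ => gaussianReal 0 v

/-- joint law of `(A, W)` at random initialization -/
def initAW (𝔡 m L : ℕ) :
    Measure ((Fin m → Fin 𝔡 → ℝ) × (Fin L → Fin m → Fin m → ℝ)) :=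
  (gaussMat m 𝔡 (2 / m)).prod (Measure.pi fun _ : Fin L => gaussMat m m (2 / m))

/-- joint law of `(A, W, B)` at random initialization -/
def initMeasure (𝔡 m d L : ℕ) :
    Measure ((Fin m → Fin 𝔡 → ℝ) ×
      (Fin L → Fin m → Fin m → ℝ) × (Fin d → Fin m → ℝ)) :=
  (gaussMat m 𝔡 (2 / m)).prod
    ((Measure.pi fun _ : Fin L => gaussMat m m (2 / m)).prod (gaussMat d m (1 / d)))


/-! ### Rows of a Gaussian matrix -/

/-- The law of one row of a Gaussian weight matrix: `q` i.i.d. `N(0, s)` entries. -/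
def rowG (q : ℕ) (s : NNReal) : Measure (Fin q → ℝ) := Measure.pi fun _ => gaussianReal 0 s

instance (q : ℕ) (s : NNReal) : IsProbabilityMeasure (rowG q s) := by
  unfold rowG; infer_instance

lemma measurable_dot_right {q : ℕ} (u : Fin q → ℝ) : Measurable (fun w : Fin q → ℝ => dot w u) := by
  unfold dot; fun_prop

lemma rowG_coord_map {q : ℕ} (s : NNReal) (i : Fin q) :
    (rowG q s).map (fun w => w i) = gaussianReal 0 s :=
  (measurePreserving_eval (fun _ : Fin q => gaussianReal 0 s) i).map_eq

lemma rowG_iIndep (q : ℕ) (s : NNReal) : iIndepFun (fun (i : Fin q) (w : Fin q → ℝ) => w i) (rowG q s) :=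
  iIndepFun_pi (μ := fun _ : Fin q => gaussianReal 0 s) (X := fun _ x => x)
    (fun _ => aemeasurable_id)

lemma rowG_coord_gauss {q : ℕ} (s : NNReal) (i : Fin q) :
    HasGaussianLaw (fun w : Fin q → ℝ => w i) (rowG q s) := by
  refine ⟨?_⟩
  rw [rowG_coord_map]
  infer_instance

lemma rowG_gauss (q : ℕ) (s : NNReal) :
    HasGaussianLaw (fun w : Fin q → ℝ => w) (rowG q s) :=
  iIndepFun.hasGaussianLaw (rowG_coord_gauss s) (rowG_iIndep q s)

/-- The continuous linear functional `w ↦ ⟨w, u⟩`. -/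
def dotCLM {q : ℕ} (u : Fin q → ℝ) : (Fin q → ℝ) →L[ℝ] ℝ :=
  ∑ j, (u j) • ContinuousLinearMap.proj (R := ℝ) (φ := fun _ : Fin q => ℝ) j

lemma dotCLM_apply {q : ℕ} (u w : Fin q → ℝ) : dotCLM u w = dot w u := by
  simp [dotCLM, dot, mul_comm]

lemma dot_pair_gauss {q : ℕ} (s : NNReal) (u v : Fin q → ℝ) :
    HasGaussianLaw (fun w : Fin q → ℝ => (dot w u, dot w v)) (rowG q s) := by
  have := (rowG_gauss q s).map_fun ((dotCLM u).prod (dotCLM v))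
  simpa [dotCLM_apply] using this

lemma dot_gauss {q : ℕ} (s : NNReal) (u : Fin q → ℝ) :
    HasGaussianLaw (fun w : Fin q → ℝ => dot w u) (rowG q s) := (dot_pair_gauss s u u).fst

lemma dot_mean {q : ℕ} (s : NNReal) (u : Fin q → ℝ) : ∫ w, dot w u ∂(rowG q s) = 0 := by
  unfold dot
  rw [integral_finsetSum _ fun i _ => ((rowG_coord_gauss s i).integrable).mul_const _]
  refine Finset.sum_eq_zero fun i _ => ?_
  rw [integral_mul_const]
  have : ∫ w, w i ∂(rowG q s) = ∫ x, x ∂((rowG q s).map (fun w => w i)) := by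
    rw [integral_map (measurable_pi_apply i).aemeasurable (by fun_prop)]
  rw [this, rowG_coord_map, integral_id_gaussianReal, zero_mul]

lemma dot_cov {q : ℕ} (s : NNReal) (u v : Fin q → ℝ) :
    cov[fun w => dot w u, fun w => dot w v; rowG q s] = s * dot u v := by
  unfold dot
  rw [covariance_fun_sum_fun_sum
    (fun i => ((rowG_coord_gauss s i).memLp_two).mul_const (u i))
    (fun i => ((rowG_coord_gauss s i).memLp_two).mul_const (v i)), Finset.mul_sum]
  refine Finset.sum_congr rfl fun i _ => ?_
  rw [Finset.sum_eq_single i]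
  · rw [covariance_mul_const_left, covariance_mul_const_right, covariance_self (measurable_pi_apply i).aemeasurable]
    have : Var[fun w : Fin q → ℝ => w i; rowG q s] = s := by
      have h := variance_map (μ := rowG q s) (X := fun x : ℝ => x) (Y := fun w : Fin q → ℝ => w i)
        (by fun_prop) (measurable_pi_apply i).aemeasurable
      rw [rowG_coord_map, variance_fun_id_gaussianReal] at h
      exact h.symm
    rw [this]; ring
  · intro j _ hj
    rw [covariance_mul_const_left, covariance_mul_const_right,
      ((rowG_iIndep q s).indepFun hj.symm).covariance_eq_zero (rowG_coord_gauss s i).memLp_two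
      (rowG_coord_gauss s j).memLp_two]
    ring
  · simp

lemma dot_self_nonneg {q : ℕ} (u : Fin q → ℝ) : 0 ≤ dot u u :=
  Finset.sum_nonneg fun _ _ => mul_self_nonneg _

lemma dot_law {q : ℕ} (s : NNReal) (u : Fin q → ℝ) :
    (rowG q s).map (fun w => dot w u) = gaussianReal 0 (s * (dot u u).toNNReal) := by
  rw [(dot_gauss s u).map_eq_gaussianReal, dot_mean, ← covariance_self, dot_cov]
  · congr 1
    rw [Real.toNNReal_mul s.coe_nonneg, Real.toNNReal_coe]
  · exact (measurable_dot_right u).aemeasurable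

lemma dot_indep {q : ℕ} (s : NNReal) (u v : Fin q → ℝ) (h : dot u v = 0) :
    IndepFun (fun w => dot w u) (fun w => dot w v) (rowG q s) :=
  (dot_pair_gauss s u v).indepFun_of_covariance_eq_zero (by rw [dot_cov, h, mul_zero])

/-! ### One-dimensional Gaussian estimates -/

lemma gauss_sq_integral (v : NNReal) : ∫ x, x ^ 2 ∂(gaussianReal 0 v) = v := by
  have h := variance_fun_id_gaussianReal (μ := 0) (v := v)
  rw [variance_of_integral_eq_zero (by fun_prop) (by simp)] at h
  exact h

lemma gauss_pow_integrable (v : NNReal) (k : ℕ) :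
    Integrable (fun x : ℝ => x ^ k) (gaussianReal 0 v) := by
  have h := (memLp_id_gaussianReal (μ := 0) (v := v) (k : NNReal)).integrable_norm_pow'
  refine h.mono' (by fun_prop) (Filter.Eventually.of_forall fun x => ?_)
  simp

/-- A crude fourth-moment bound, obtained from `y⁴/24 ≤ eʸ + e⁻ʸ` and the Gaussian moment
generating function. -/
lemma gauss_four (v : NNReal) : ∫ x, x ^ 4 ∂(gaussianReal 0 v) ≤ 80 * (v : ℝ) ^ 2 := by
  rcases eq_or_ne v 0 with rfl | hv
  · simp
  have hv' : (0 : ℝ) < v := by positivity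
  set t : ℝ := (Real.sqrt v)⁻¹
  have ht2 : t ^ 2 = (v : ℝ)⁻¹ := by
    simp only [t]; rw [inv_pow, Real.sq_sqrt hv'.le]
  have hm : ∀ t : ℝ, ∫ x, Real.exp (t * x) ∂(gaussianReal 0 v) = Real.exp (v * t ^ 2 / 2) := by
    intro t
    have := congrFun (mgf_fun_id_gaussianReal (μ := 0) (v := v)) t
    simpa [mgf] using this
  have hpt : ∀ x : ℝ, x ^ 4 ≤ 24 * (v : ℝ) ^ 2 * (Real.exp (t * x) + Real.exp (-t * x)) := by
    intro x
    have h1 := Real.pow_div_factorial_le_exp (|t * x|) (abs_nonneg _) 4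
    have h2 : Real.exp |t * x| ≤ Real.exp (t * x) + Real.exp (-t * x) := by
      rcases abs_cases (t * x) with ⟨h, _⟩ | ⟨h, _⟩ <;> rw [h]
      · linarith [Real.exp_pos (-t * x)]
      · rw [neg_mul]; linarith [Real.exp_pos (t * x)]
    have h3 : |t * x| ^ 4 = (v : ℝ)⁻¹ ^ 2 * x ^ 4 := by
      rw [← ht2, Even.pow_abs (by decide)]; ring
    rw [h3] at h1
    have h4 : x ^ 4 = 24 * (v : ℝ) ^ 2 * ((v : ℝ)⁻¹ ^ 2 * x ^ 4 / (Nat.factorial 4 : ℝ)) := by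
      simp [Nat.factorial]; field_simp
    rw [h4]
    exact mul_le_mul_of_nonneg_left (h1.trans h2) (by positivity)
  calc ∫ x, x ^ 4 ∂(gaussianReal 0 v)
      ≤ ∫ x, 24 * (v : ℝ) ^ 2 * (Real.exp (t * x) + Real.exp (-t * x)) ∂(gaussianReal 0 v) := by
        refine integral_mono (gauss_pow_integrable v 4) ?_ hpt
        exact ((integrable_exp_mul_gaussianReal t).add (integrable_exp_mul_gaussianReal (-t))).const_mul _
    _ = 24 * (v : ℝ) ^ 2 * (2 * Real.exp (1 / 2)) := by
        rw [integral_const_mul, integral_add (integrable_exp_mul_gaussianReal t)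
          (integrable_exp_mul_gaussianReal (-t)), hm, hm, neg_sq, ht2, mul_inv_cancel₀ hv'.ne']
        ring
    _ ≤ 80 * (v : ℝ) ^ 2 := by
        have : Real.exp (1 / 2) ≤ 5 / 3 := by
          have h := Real.exp_one_lt_d9
          have h2 : Real.exp (1 / 2) ^ 2 = Real.exp 1 := by rw [← Real.exp_nat_mul]; norm_num
          nlinarith [Real.exp_pos (1 / 2)]
        nlinarith [sq_nonneg (v : ℝ)]

/-- Gaussian small-ball estimate, from the bound `1/√(2πv)` on the density. -/
lemma gauss_small_ball (v : NNReal) (hv : v ≠ 0) (r t : ℝ) (hr : 0 < r) (hrv : r ^ 2 ≤ v) (ht : 0 ≤ t) :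
    (gaussianReal 0 v).real {x | |x| ≤ t} ≤ t / r := by
  have hS : {x : ℝ | |x| ≤ t} = Set.Icc (-t) t := by ext x; simp [abs_le]
  rw [hS, measureReal_def, gaussianReal_apply_eq_integral 0 hv,
    ENNReal.toReal_ofReal (integral_nonneg fun x => gaussianPDFReal_nonneg _ _ _)]
  have hpdf : ∀ x, gaussianPDFReal 0 v x ≤ 1 / (2 * r) := by
    intro x
    rw [gaussianPDFReal_def]
    have h1 : Real.exp (-(x - 0) ^ 2 / (2 * v)) ≤ 1 := by
      rw [Real.exp_le_one_iff]
      exact div_nonpos_of_nonpos_of_nonneg (by nlinarith [sq_nonneg (x-0)]) (by positivity)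
    have h2 : 2 * r ≤ Real.sqrt (2 * Real.pi * v) := by
      apply Real.le_sqrt_of_sq_le
      nlinarith [Real.pi_gt_three, sq_nonneg r]
    calc _ ≤ (Real.sqrt (2 * Real.pi * v))⁻¹ * 1 :=
          mul_le_mul_of_nonneg_left h1 (by positivity)
      _ ≤ _ := by
        rw [mul_one, one_div]
        exact inv_anti₀ (by positivity) h2
  calc ∫ x in Set.Icc (-t) t, gaussianPDFReal 0 v x
      ≤ ∫ x in Set.Icc (-t) t, 1 / (2 * r) := by
        refine integral_mono (integrable_gaussianPDFReal 0 v).integrableOn ?_ hpdf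
        exact integrable_const _
    _ = t / r := by
        simp [measureReal_def, ENNReal.toReal_ofReal, ht]
        field_simp; ring

lemma gauss_exp_sq (V : NNReal) (hV : V ≠ 0) (θ : ℝ) (h : |θ * V| ≤ 1 / 4) :
    ∫⁻ x, ENNReal.ofReal (Real.exp (θ * x ^ 2)) ∂(gaussianReal 0 V)
      = ENNReal.ofReal (Real.sqrt (1 / (1 - 2 * (θ * V)))) := by
  have hV' : (0 : ℝ) < V := by positivity
  obtain ⟨h1, h2⟩ := abs_le.1 h
  set b : ℝ := 1 / (2 * V) - θ with hb
  have hbV : b * (2 * V) = 1 - 2 * (θ * V) := by rw [hb]; field_simp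
  have hbpos : 0 < b := by
    by_contra hcon
    nlinarith
  rw [gaussianReal_of_var_ne_zero 0 hV,
    lintegral_withDensity_eq_lintegral_mul _ (measurable_gaussianPDF 0 V) (by fun_prop)]
  have : ∀ x : ℝ, (gaussianPDF 0 V * fun x => ENNReal.ofReal (Real.exp (θ * x ^ 2))) x
      = ENNReal.ofReal ((Real.sqrt (2 * Real.pi * V))⁻¹ * Real.exp (-b * x ^ 2)) := by
    intro x
    rw [Pi.mul_apply, gaussianPDF_def, ← ENNReal.ofReal_mul (gaussianPDFReal_nonneg _ _ _),
      gaussianPDFReal_def, mul_assoc, ← Real.exp_add]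
    congr 3
    rw [hb]; ring
  simp_rw [this]
  rw [← ofReal_integral_eq_lintegral_ofReal ((integrable_exp_neg_mul_sq hbpos).const_mul _)
    (Filter.Eventually.of_forall fun x => by positivity), integral_const_mul, integral_gaussian,
    ← Real.sqrt_inv, ← Real.sqrt_mul (by positivity), ← hbV]
  congr 2
  field_simp

/-- Moment generating function of the square of a rectified Gaussian: by symmetry it equals
`(1 + (1 - 2θV)^(-1/2)) / 2`, which is bounded to second order in `θV`. -/
lemma gauss_relu_mgf (V : NNReal) (hV : V ≠ 0) (θ : ℝ) (h : |θ * V| ≤ 1 / 4) :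
    ∫⁻ x, ENNReal.ofReal (Real.exp (θ * (max x 0) ^ 2)) ∂(gaussianReal 0 V)
      ≤ ENNReal.ofReal (Real.exp (θ * V / 2 + 2 * (θ * V) ^ 2)) := by
  set F : ℝ → ENNReal := fun x => ENNReal.ofReal (Real.exp (θ * (max x 0) ^ 2)) with hF
  have hFm : Measurable F := by fun_prop
  have hneg : ∫⁻ x, F (-x) ∂(gaussianReal 0 V) = ∫⁻ x, F x ∂(gaussianReal 0 V) := by
    have := gaussianReal_map_neg (μ := 0) (v := V)
    rw [neg_zero] at this
    conv_rhs => rw [← this]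
    rw [lintegral_map hFm (by fun_prop)]
  have hsum : (∫⁻ x, F x ∂(gaussianReal 0 V)) + (∫⁻ x, F x ∂(gaussianReal 0 V))
      = ENNReal.ofReal (1 + Real.sqrt (1 / (1 - 2 * (θ * V)))) := by
    nth_rw 2 [← hneg]
    rw [← lintegral_add_left hFm, ENNReal.ofReal_add zero_le_one (Real.sqrt_nonneg _),
      ← gauss_exp_sq V hV θ h]
    have : ∀ x, F x + F (-x) = ENNReal.ofReal 1 + ENNReal.ofReal (Real.exp (θ * x ^ 2)) := by
      intro x
      simp only [hF]
      rcases le_total 0 x with hx | hx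
      · rw [max_eq_left hx, max_eq_right (by linarith : -x ≤ 0), add_comm]; simp
      · rw [max_eq_right hx, max_eq_left (by linarith : 0 ≤ -x)]; simp
    simp_rw [this]
    rw [lintegral_add_left (by fun_prop)]
    simp
  obtain ⟨h1, h2⟩ := abs_le.1 h
  set l := θ * V
  have hsq : Real.sqrt (1 / (1 - 2 * l)) ≤ 1 + l + 4 * l ^ 2 := by
    apply Real.sqrt_le_iff.2 ⟨by nlinarith, ?_⟩
    rw [div_le_iff₀ (by linarith)]
    have : 0 ≤ l ^ 2 * (5 - 10 * l - 32 * l ^ 3) := by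
      apply mul_nonneg (sq_nonneg _)
      have : l ^ 3 ≤ 1 / 64 := by nlinarith [sq_nonneg l, sq_nonneg (l + 1/4)]
      linarith
    nlinarith
  have hB : 1 + Real.sqrt (1 / (1 - 2 * l)) ≤
      Real.exp (l / 2 + 2 * l ^ 2) + Real.exp (l / 2 + 2 * l ^ 2) := by
    have := Real.add_one_le_exp (l / 2 + 2 * l ^ 2)
    linarith
  by_contra hcon
  push Not at hcon
  have h3 := ENNReal.add_lt_add hcon hcon
  rw [hsum, ← ENNReal.ofReal_add (by positivity) (by positivity)] at h3
  exact absurd (ENNReal.ofReal_le_ofReal hB) (not_le.2 h3)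

/-! ### Contribution of a single neuron to the squared distance -/

lemma dot_sub_right {q : ℕ} (w u v : Fin q → ℝ) : dot w (u - v) = dot w u - dot w v := by
  simp [dot, mul_sub]

lemma dot_smul_right {q : ℕ} (w u : Fin q → ℝ) (c : ℝ) : dot w (c • u) = c * dot w u := by
  simp only [dot, Pi.smul_apply, smul_eq_mul, Finset.mul_sum]
  exact Finset.sum_congr rfl fun i _ => by ring

lemma dot_comm' {q : ℕ} (w u : Fin q → ℝ) : dot w u = dot u w := by
  simp [dot, mul_comm]

lemma dot_neg_left {q : ℕ} (w u : Fin q → ℝ) : dot (-w) u = - dot w u := by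
  simp [dot]

lemma dot_pow_integrable {q : ℕ} (s : NNReal) (u : Fin q → ℝ) (k : ℕ) :
    Integrable (fun w => dot w u ^ k) (rowG q s) := by
  have h := gauss_pow_integrable (s * (dot u u).toNNReal) k
  rw [← dot_law, integrable_map_measure (by fun_prop) (measurable_dot_right u).aemeasurable] at h
  exact h

lemma dot_pow_integral {q : ℕ} (s : NNReal) (u : Fin q → ℝ) (k : ℕ) :
    ∫ w, dot w u ^ k ∂(rowG q s) = ∫ x, x ^ k ∂(gaussianReal 0 (s * (dot u u).toNNReal)) := by
  rw [← dot_law, integral_map (measurable_dot_right u).aemeasurable (by fun_prop)]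

lemma dot_sq_integral {q : ℕ} (s : NNReal) (u : Fin q → ℝ) :
    ∫ w, dot w u ^ 2 ∂(rowG q s) = s * dot u u := by
  rw [dot_pow_integral, gauss_sq_integral]
  simp [Real.coe_toNNReal _ (dot_self_nonneg u)]

lemma dot_four_integral {q : ℕ} (s : NNReal) (u : Fin q → ℝ) :
    ∫ w, dot w u ^ 4 ∂(rowG q s) ≤ 80 * (s * dot u u) ^ 2 := by
  rw [dot_pow_integral]
  refine (gauss_four _).trans_eq ?_
  simp [Real.coe_toNNReal _ (dot_self_nonneg u)]

lemma rowG_neg {q : ℕ} (s : NNReal) : MeasurePreserving (fun w : Fin q → ℝ => -w) (rowG q s) (rowG q s) := by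
  refine measurePreserving_pi (fun _ : Fin q => gaussianReal 0 s) (fun _ => gaussianReal 0 s)
    (f := fun _ x => -x) fun i => ⟨by fun_prop, ?_⟩
  rw [gaussianReal_map_neg, neg_zero]

/-- The loss `max(-ab, 0)`, which is nonzero only when the two pre-activations `a = ⟨w,u⟩`
and `b = ⟨w,v⟩` have opposite signs. -/
def crossLoss {q : ℕ} (u v w : Fin q → ℝ) : ℝ := max (-(dot w u * dot w v)) 0

/-- Contribution of one neuron to the squared distance of the two post-activation vectors. -/
def rowDist {q : ℕ} (u v w : Fin q → ℝ) : ℝ := (max (dot w u) 0 - max (dot w v) 0) ^ 2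

lemma crossLoss_le {q : ℕ} (u v w : Fin q → ℝ) : crossLoss u v w ≤ dot w (u - v) ^ 2 / 4 := by
  rw [dot_sub_right]
  unfold crossLoss
  refine max_le ?_ (by positivity)
  nlinarith [sq_nonneg (dot w u + dot w v)]

lemma crossLoss_nonneg {q : ℕ} (u v w : Fin q → ℝ) : 0 ≤ crossLoss u v w := le_max_right _ _

lemma measurable_crossLoss {q : ℕ} (u v : Fin q → ℝ) : Measurable (crossLoss u v) := by
  have := measurable_dot_right u
  have := measurable_dot_right v
  unfold crossLoss; fun_prop

lemma measurable_rowDist {q : ℕ} (u v : Fin q → ℝ) : Measurable (rowDist u v) := by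
  have := measurable_dot_right u
  have := measurable_dot_right v
  unfold rowDist; fun_prop

lemma crossLoss_integrable {q : ℕ} (s : NNReal) (u v : Fin q → ℝ) :
    Integrable (crossLoss u v) (rowG q s) := by
  refine ((dot_pow_integrable s (u - v) 2).div_const 4).mono'
    (measurable_crossLoss u v).aestronglyMeasurable (Filter.Eventually.of_forall fun w => ?_)
  rw [Real.norm_of_nonneg (crossLoss_nonneg u v w)]
  exact crossLoss_le u v w

lemma rowDist_le {q : ℕ} (u v w : Fin q → ℝ) : rowDist u v w ≤ dot w (u - v) ^ 2 := by
  unfold rowDist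
  rw [dot_sub_right, sq_le_sq]
  exact abs_max_sub_max_le_abs _ _ _

lemma rowDist_nonneg {q : ℕ} (u v w : Fin q → ℝ) : 0 ≤ rowDist u v w := sq_nonneg _

lemma rowDist_integrable {q : ℕ} (s : NNReal) (u v : Fin q → ℝ) :
    Integrable (rowDist u v) (rowG q s) := by
  refine (dot_pow_integrable s (u - v) 2).mono'
    (measurable_rowDist u v).aestronglyMeasurable (Filter.Eventually.of_forall fun w => ?_)
  rw [Real.norm_of_nonneg (rowDist_nonneg u v w)]
  exact rowDist_le u v w

lemma rowDist_add_neg {q : ℕ} (u v w : Fin q → ℝ) :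
    rowDist u v w + rowDist u v (-w) = dot w (u - v) ^ 2 - 2 * crossLoss u v w := by
  unfold rowDist crossLoss
  rw [dot_neg_left, dot_neg_left, dot_sub_right]
  generalize dot w u = a
  generalize dot w v = b
  rcases le_total 0 a with ha | ha <;> rcases le_total 0 b with hb | hb
  · rw [max_eq_left ha, max_eq_left hb, max_eq_right (by linarith), max_eq_right (by linarith),
      max_eq_right (by nlinarith)]
    ring
  · rw [max_eq_left ha, max_eq_right hb, max_eq_right (by linarith), max_eq_left (by linarith),
      max_eq_left (by nlinarith)]
    ring
  · rw [max_eq_right ha, max_eq_left hb, max_eq_left (by linarith), max_eq_right (by linarith),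
      max_eq_left (by nlinarith)]
    ring
  · rw [max_eq_right ha, max_eq_right hb, max_eq_left (by linarith), max_eq_left (by linarith),
      max_eq_right (by nlinarith)]
    ring

/-- Mean contribution of one neuron to the squared distance. Symmetrising in `w` turns the
rectified difference into the linear one up to the cross loss. -/
lemma rowDist_integral {q : ℕ} (s : NNReal) (u v : Fin q → ℝ) :
    ∫ w, rowDist u v w ∂(rowG q s)
      = s * dot (u - v) (u - v) / 2 - ∫ w, crossLoss u v w ∂(rowG q s) := by
  have hneg : ∫ w, rowDist u v (-w) ∂(rowG q s) = ∫ w, rowDist u v w ∂(rowG q s) := by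
    conv_rhs => rw [← (rowG_neg s).map_eq]
    rw [integral_map (by fun_prop) (measurable_rowDist u v).aestronglyMeasurable]
  have hint : Integrable (fun w => rowDist u v (-w)) (rowG q s) :=
    (rowG_neg s).integrable_comp_of_integrable (rowDist_integrable s u v)
  have h := integral_congr_ae (μ := rowG q s)
    (Filter.Eventually.of_forall fun w => rowDist_add_neg u v w)
  rw [integral_add (rowDist_integrable s u v) hint, hneg,
    integral_sub (dot_pow_integrable s (u - v) 2) ((crossLoss_integrable s u v).const_mul 2),
    dot_sq_integral, integral_const_mul] at h
  linarith

lemma exp_neg_le_quadratic (y : ℝ) (hy : 0 ≤ y) : Real.exp (-y) ≤ 1 - y + y ^ 2 / 2 := by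
  have h := Real.quadratic_le_exp_of_nonneg hy
  have h2 : 0 < 1 - y + y ^ 2 / 2 := by nlinarith [sq_nonneg (y - 1)]
  have h3 : Real.exp (-y) * Real.exp y = 1 := by rw [← Real.exp_add]; simp
  have h4 := Real.exp_pos (-y)
  by_contra hcon
  push Not at hcon
  have : (1 - y + y ^ 2 / 2) * (1 + y + y ^ 2 / 2) < Real.exp (-y) * Real.exp y := by
    apply mul_lt_mul hcon h (by positivity) h4.le
  nlinarith [sq_nonneg (y ^ 2)]

/-- Lower-tail exponential moment of one neuron's contribution, from `e⁻ʸ ≤ 1 - y + y²/2` and the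
fourth-moment bound. -/
lemma rowDist_mgf {q : ℕ} (s : NNReal) (u v : Fin q → ℝ) (θ : ℝ) (hθ : 0 ≤ θ) :
    ∫⁻ w, ENNReal.ofReal (Real.exp (-(θ * rowDist u v w))) ∂(rowG q s)
      ≤ ENNReal.ofReal (Real.exp (-(θ * (s * dot (u - v) (u - v) / 2
          - ∫ w, crossLoss u v w ∂(rowG q s))) + 40 * θ ^ 2 * (s * dot (u - v) (u - v)) ^ 2)) := by
  have hm := measurable_rowDist u v
  have hint : Integrable (fun w => Real.exp (-(θ * rowDist u v w))) (rowG q s) := by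
    refine (integrable_const (1 : ℝ)).mono' (by fun_prop) (Filter.Eventually.of_forall fun w => ?_)
    rw [Real.norm_of_nonneg (Real.exp_pos _).le, Real.exp_le_one_iff]
    have := mul_nonneg hθ (rowDist_nonneg u v w)
    linarith
  rw [← ofReal_integral_eq_lintegral_ofReal hint
    (Filter.Eventually.of_forall fun w => (Real.exp_pos _).le)]
  apply ENNReal.ofReal_le_ofReal
  have hI1 := rowDist_integrable s u v
  have hI4 := dot_pow_integrable s (u - v) 4
  have hIs : Integrable (fun w => 1 - θ * rowDist u v w) (rowG q s) :=
    (integrable_const 1).sub (hI1.const_mul θ)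
  calc ∫ w, Real.exp (-(θ * rowDist u v w)) ∂(rowG q s)
      ≤ ∫ w, ((1 - θ * rowDist u v w) + θ ^ 2 / 2 * dot w (u - v) ^ 4) ∂(rowG q s) := by
        refine integral_mono hint
          (hIs.add (hI4.const_mul _)) fun w => ?_
        have h0 := rowDist_nonneg u v w
        have h1 := exp_neg_le_quadratic _ (mul_nonneg hθ h0)
        have h2 : rowDist u v w ^ 2 ≤ dot w (u - v) ^ 4 := by
          have := pow_le_pow_left₀ h0 (rowDist_le u v w) 2
          rw [← pow_mul] at this; exact this
        have h3 : (θ * rowDist u v w) ^ 2 / 2 ≤ θ ^ 2 / 2 * dot w (u - v) ^ 4 := by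
          rw [mul_pow, mul_div_right_comm]
          exact mul_le_mul_of_nonneg_left h2 (by positivity)
        simp only
        linarith
    _ = (1 - θ * ∫ w, rowDist u v w ∂(rowG q s))
          + θ ^ 2 / 2 * ∫ w, dot w (u - v) ^ 4 ∂(rowG q s) := by
        rw [integral_add hIs (hI4.const_mul _),
          integral_sub (integrable_const 1) (hI1.const_mul θ), integral_const_mul,
          integral_const_mul]
        simp
    _ ≤ -(θ * (s * dot (u - v) (u - v) / 2
          - ∫ w, crossLoss u v w ∂(rowG q s))) + 40 * θ ^ 2 * (s * dot (u - v) (u - v)) ^ 2 + 1 := by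
        rw [rowDist_integral]
        have := mul_le_mul_of_nonneg_left (dot_four_integral s (u - v))
          (by positivity : 0 ≤ θ ^ 2 / 2)
        nlinarith
    _ ≤ _ := Real.add_one_le_exp _

lemma crossLoss_integral_le_half {q : ℕ} (s : NNReal) (u v : Fin q → ℝ) :
    ∫ w, crossLoss u v w ∂(rowG q s) ≤ s * dot (u - v) (u - v) / 4 := by
  rw [← dot_sq_integral, ← integral_div]
  exact integral_mono (crossLoss_integrable s u v) ((dot_pow_integrable s (u - v) 2).div_const 4)
    fun w => crossLoss_le u v w

/-- Cauchy–Schwarz in the form needed below. -/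
lemma dot_sq_le {q : ℕ} (u v : Fin q → ℝ) : dot u v ^ 2 ≤ dot u u * dot v v := by
  have := Finset.sum_mul_sq_le_sq_mul_sq Finset.univ u v
  simpa [dot, sq] using this

/-- A third-moment estimate for independent centred Gaussians `x` (variance at least `ra²`)
and `y` (variance at most `r²`): the event `|x| ≤ 2|y|` has conditional probability `O(|y|/ra)`. -/
lemma gauss_prod_bound (Va Vz : NNReal) (hVa : Va ≠ 0) (ra r : ℝ) (hra : 0 < ra) (hr : 0 < r)
    (h1 : ra ^ 2 ≤ Va) (h2 : (Vz : ℝ) ≤ r ^ 2) :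
    ∫ p, (if |p.1| ≤ 2 * |p.2| then p.2 ^ 2 else 0) ∂((gaussianReal 0 Va).prod (gaussianReal 0 Vz))
      ≤ 81 * r ^ 3 / ra := by
  have hmeas : Measurable (fun p : ℝ × ℝ => if |p.1| ≤ 2 * |p.2| then p.2 ^ 2 else 0) := by
    refine Measurable.ite (measurableSet_le ?_ ?_) ?_ measurable_const
    · exact (measurable_fst).abs
    · exact measurable_const.mul measurable_snd.abs
    · fun_prop
  have hsq : Integrable (fun p : ℝ × ℝ => p.2 ^ 2) ((gaussianReal 0 Va).prod (gaussianReal 0 Vz)) :=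
    (gauss_pow_integrable Vz 2).comp_snd _
  have hint : Integrable (fun p : ℝ × ℝ => if |p.1| ≤ 2 * |p.2| then p.2 ^ 2 else 0)
      ((gaussianReal 0 Va).prod (gaussianReal 0 Vz)) := by
    refine hsq.mono' hmeas.aestronglyMeasurable (Filter.Eventually.of_forall fun p => ?_)
    split_ifs
    · rw [Real.norm_of_nonneg (sq_nonneg _)]
    · simp [sq_nonneg]
  rw [integral_prod_symm _ hint]
  have hin : ∀ y : ℝ, ∫ x, (if |x| ≤ 2 * |y| then y ^ 2 else 0) ∂(gaussianReal 0 Va)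
      ≤ (r * y ^ 2 + y ^ 4 / r) / ra := by
    intro y
    have hS : MeasurableSet {x : ℝ | |x| ≤ 2 * |y|} :=
      measurableSet_le (measurable_id.abs) measurable_const
    have : (fun x : ℝ => if |x| ≤ 2 * |y| then y ^ 2 else 0)
        = {x : ℝ | |x| ≤ 2 * |y|}.indicator (fun _ => y ^ 2) := by
      ext x; simp [Set.indicator]
    rw [this, integral_indicator_const _ hS, smul_eq_mul]
    have hb := gauss_small_ball Va hVa ra (2 * |y|) hra h1 (by positivity)
    calc _ ≤ 2 * |y| / ra * y ^ 2 := mul_le_mul_of_nonneg_right hb (sq_nonneg _)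
      _ = (2 * |y| * |y| ^ 2) / ra := by rw [sq_abs]; ring
      _ ≤ (r * y ^ 2 + y ^ 4 / r) / ra := by
        apply div_le_div_of_nonneg_right _ hra.le
        rw [← sq_abs y, ← Even.pow_abs (by decide : Even 4) y]
        have : r * |y| ^ 2 + |y| ^ 4 / r - 2 * |y| * |y| ^ 2 = |y| ^ 2 * (r - |y|) ^ 2 / r := by
          field_simp; ring
        have h0 : 0 ≤ |y| ^ 2 * (r - |y|) ^ 2 / r := by positivity
        linarith
  have hI2 := (gauss_pow_integrable Vz 2).const_mul r
  have hI4 := (gauss_pow_integrable Vz 4).div_const r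
  calc _ ≤ ∫ y, (r * y ^ 2 + y ^ 4 / r) / ra ∂(gaussianReal 0 Vz) :=
        integral_mono hint.integral_prod_right ((hI2.add hI4).div_const ra) hin
    _ = (r * Vz + (∫ y, y ^ 4 ∂(gaussianReal 0 Vz)) / r) / ra := by
        rw [integral_div, integral_add hI2 hI4, integral_const_mul, integral_div,
          gauss_sq_integral]
    _ ≤ (r * r ^ 2 + 80 * (r ^ 2) ^ 2 / r) / ra := by
        have h4 := gauss_four Vz
        have : (Vz : ℝ) ^ 2 ≤ (r ^ 2) ^ 2 := pow_le_pow_left₀ Vz.coe_nonneg h2 2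
        gcongr
        linarith
    _ = 81 * r ^ 3 / ra := by field_simp; ring

/-- For nearby `u, v` the expected cross loss is cubic in their distance: opposite signs force
`|⟨w,u⟩| ≤ 2|z|`, where `z` is the component of `⟨w,u-v⟩` independent of `⟨w,u⟩`. -/
lemma crossLoss_integral_cubic {q : ℕ} (s : NNReal) (hs : s ≠ 0) (u v : Fin q → ℝ) (δ : ℝ)
    (hδ : 0 < δ) (hδ1 : δ ≤ 1 / 8) (hu : 1 / 2 ≤ dot u u) (hD : dot (u - v) (u - v) ≤ 4 * δ ^ 2) :
    ∫ w, crossLoss u v w ∂(rowG q s) ≤ 1296 * s * δ ^ 3 := by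
  have hs' : (0 : ℝ) < s := by positivity
  set α := dot u (u - v) / dot u u with hα
  set p := (u - v) - α • u with hp
  have hup : dot u p = 0 := by
    rw [hp, dot_sub_right, dot_smul_right, hα]; field_simp; ring
  have hCS := dot_sq_le u (u - v)
  have hα2 : α ^ 2 ≤ 1 / 4 := by
    have hDu : dot (u - v) (u - v) ≤ dot u u / 4 := by nlinarith
    rw [hα, div_pow, div_le_iff₀ (by positivity)]
    nlinarith [mul_le_mul_of_nonneg_left hDu (dot_self_nonneg u)]
  have hα1 : |α| ≤ 1 / 2 := by
    apply abs_le_of_sq_le_sq _ (by norm_num)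
    linarith
  have hpp : dot p p ≤ 4 * δ ^ 2 := by
    have e1 : dot p p = dot p (u - v) - α * dot p u := by
      conv_lhs => rw [hp]
      rw [dot_sub_right, dot_smul_right]
    have e2 : dot p (u - v) = dot (u - v) (u - v) - α * dot u (u - v) := by
      rw [dot_comm', hp, dot_sub_right, dot_smul_right, dot_comm' (u - v) u]
    have e3 : α * dot u (u - v) = α ^ 2 * dot u u := by rw [hα]; field_simp
    rw [e1, dot_comm' p u, hup, e2, e3]
    nlinarith [mul_nonneg (sq_nonneg α) (dot_self_nonneg u)]
  have hpt : ∀ w, crossLoss u v w ≤ (if |dot w u| ≤ 2 * |dot w p| then dot w p ^ 2 else 0) := by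
    intro w
    have hz : dot w p = dot w u - dot w v - α * dot w u := by
      rw [hp, dot_sub_right, dot_sub_right, dot_smul_right]
    rcases le_or_gt 0 (dot w u * dot w v) with h | h
    · have : crossLoss u v w = 0 := by
        unfold crossLoss; rw [max_eq_right (by linarith)]
      rw [this]; split_ifs <;> positivity
    · have hl := crossLoss_le u v w
      rw [dot_sub_right] at hl
      set a := dot w u
      set b := dot w v
      set z := dot w p
      -- `a` and `b` have opposite signs, so `|a| ≤ |a - b| ≤ |a| / 2 + |z|`.
      have h1 : |a| ≤ |a - b| := by
        rw [← sq_le_sq]; nlinarith [sq_nonneg b]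
      have h2 : |a - b| ≤ |a| / 2 + |z| := by
        have : a - b = α * a + z := by rw [hz]; ring
        rw [this]
        refine (abs_add_le _ _).trans ?_
        rw [abs_mul]
        nlinarith [abs_nonneg a]
      rw [if_pos (by linarith)]
      have h3 : |a - b| ≤ 2 * |z| := by linarith
      have h4 : (a - b) ^ 2 ≤ (2 * |z|) ^ 2 := by
        rw [← sq_abs]; exact pow_le_pow_left₀ (abs_nonneg _) h3 2
      rw [mul_pow, sq_abs] at h4
      linarith
  have hmeas : Measurable (fun p : ℝ × ℝ => if |p.1| ≤ 2 * |p.2| then p.2 ^ 2 else 0) := by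
    refine Measurable.ite (measurableSet_le ?_ ?_) ?_ measurable_const
    · exact (measurable_fst).abs
    · exact measurable_const.mul measurable_snd.abs
    · fun_prop
  have hmu := measurable_dot_right u
  have hmp := measurable_dot_right p
  have hlaw : (rowG q s).map (fun w => (dot w u, dot w p))
      = (gaussianReal 0 (s * (dot u u).toNNReal)).prod (gaussianReal 0 (s * (dot p p).toNNReal)) := by
    rw [(indepFun_iff_map_prod_eq_prod_map_map hmu.aemeasurable hmp.aemeasurable).1
      (dot_indep s u p hup), dot_law, dot_law]
  have hint : Integrable (fun w => if |dot w u| ≤ 2 * |dot w p| then dot w p ^ 2 else 0)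
      (rowG q s) := by
    refine (dot_pow_integrable s p 2).mono'
      (hmeas.comp (hmu.prodMk hmp)).aestronglyMeasurable (Filter.Eventually.of_forall fun w => ?_)
    split_ifs
    · rw [Real.norm_of_nonneg (sq_nonneg _)]
    · simp [sq_nonneg]
  have hne : s * (dot u u).toNNReal ≠ 0 := by
    refine mul_ne_zero hs ?_
    simp only [ne_eq, Real.toNNReal_eq_zero, not_le]; linarith
  have hsq : Real.sqrt s ^ 2 = s := Real.sq_sqrt hs'.le
  have hsp : 0 < Real.sqrt s := Real.sqrt_pos.2 hs'
  calc ∫ w, crossLoss u v w ∂(rowG q s)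
      ≤ ∫ w, (if |dot w u| ≤ 2 * |dot w p| then dot w p ^ 2 else 0) ∂(rowG q s) :=
        integral_mono (crossLoss_integrable s u v) hint hpt
    _ = ∫ p, (if |p.1| ≤ 2 * |p.2| then p.2 ^ 2 else 0)
          ∂((gaussianReal 0 (s * (dot u u).toNNReal)).prod
            (gaussianReal 0 (s * (dot p p).toNNReal))) := by
        rw [← hlaw, integral_map (hmu.prodMk hmp).aemeasurable hmeas.aestronglyMeasurable]
    _ ≤ 81 * (2 * δ * Real.sqrt s) ^ 3 / (Real.sqrt s / 2) := by
        refine gauss_prod_bound _ _ hne _ _ (by positivity) (by positivity) ?_ ?_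
        · simp only [NNReal.coe_mul, Real.coe_toNNReal _ (dot_self_nonneg u)]
          rw [div_pow, hsq]; nlinarith
        · simp only [NNReal.coe_mul, Real.coe_toNNReal _ (dot_self_nonneg p)]
          rw [mul_pow, hsq]; nlinarith
    _ = 1296 * s * δ ^ 3 := by
        have : 81 * (2 * δ * Real.sqrt s) ^ 3 / (Real.sqrt s / 2)
          = 1296 * Real.sqrt s ^ 2 * δ ^ 3 := by field_simp; ring
        rw [this, hsq]

/-! ### Concentration over one layer -/

/-- Chernoff bound for a sum over the independent rows of a Gaussian matrix. -/
lemma row_chernoff {m q : ℕ} (s : NNReal) (f : (Fin q → ℝ) → ℝ) (hf : Measurable f) (c : ℝ)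
    (h : ∫⁻ w, ENNReal.ofReal (Real.exp (f w)) ∂(rowG q s) ≤ ENNReal.ofReal (Real.exp (-c))) :
    gaussMat m q s {M | 0 ≤ ∑ k, f (M k)} ≤ ENNReal.ofReal (Real.exp (-(m * c))) := by
  have hμ : gaussMat m q s = Measure.pi fun _ : Fin m => rowG q s := rfl
  rw [hμ]
  have hg : Measurable fun w => ENNReal.ofReal (Real.exp (f w)) := by fun_prop
  have hind : iIndepFun (fun (k : Fin m) (M : Fin m → Fin q → ℝ) => ENNReal.ofReal (Real.exp (f (M k))))
      (Measure.pi fun _ : Fin m => rowG q s) :=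
    iIndepFun_pi (μ := fun _ : Fin m => rowG q s)
      (X := fun _ w => ENNReal.ofReal (Real.exp (f w))) fun _ => hg.aemeasurable
  have hprod := lintegral_prod_eq_prod_lintegral_of_indepFun Finset.univ _ hind
    (fun k => hg.comp (measurable_pi_apply k))
  have hone : ∀ k : Fin m, ∫⁻ M, ENNReal.ofReal (Real.exp (f (M k)))
      ∂(Measure.pi fun _ : Fin m => rowG q s) = ∫⁻ w, ENNReal.ofReal (Real.exp (f w)) ∂(rowG q s) := by
    intro k
    have := (measurePreserving_eval (fun _ : Fin m => rowG q s) k).map_eq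
    conv_rhs => rw [← this]
    rw [lintegral_map hg (by fun_prop)]
  have hmeasF : Measurable fun M : Fin m → Fin q → ℝ => ∏ k, ENNReal.ofReal (Real.exp (f (M k))) :=
    Finset.measurable_prod _ fun k _ => hg.comp (measurable_pi_apply k)
  have hmk := mul_meas_ge_le_lintegral (μ := Measure.pi fun _ : Fin m => rowG q s) hmeasF 1
  rw [one_mul] at hmk
  calc _ ≤ (Measure.pi fun _ : Fin m => rowG q s)
          {M | 1 ≤ ∏ k, ENNReal.ofReal (Real.exp (f (M k)))} := by
        refine measure_mono fun M hM => ?_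
        simp only [Set.mem_ofPred_eq] at hM ⊢
        rw [← ENNReal.ofReal_prod_of_nonneg fun k _ => (Real.exp_pos _).le, ← Real.exp_sum,
          ENNReal.one_le_ofReal]
        exact Real.one_le_exp hM
    _ ≤ _ := hmk
    _ = ∏ k : Fin m, ∫⁻ w, ENNReal.ofReal (Real.exp (f w)) ∂(rowG q s) := by
        rw [hprod]; exact Finset.prod_congr rfl fun k _ => hone k
    _ ≤ ∏ k : Fin m, ENNReal.ofReal (Real.exp (-c)) := Finset.prod_le_prod' fun _ _ => h
    _ = _ := by
        rw [Finset.prod_const, Finset.card_univ, Fintype.card_fin,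
          ← ENNReal.ofReal_pow (Real.exp_pos _).le, ← Real.exp_nat_mul]
        congr 2; ring

lemma dot_relu_self {m q : ℕ} (M : Fin m → Fin q → ℝ) (u : Fin q → ℝ) :
    dot (relu (mulVec M u)) (relu (mulVec M u)) = ∑ k, max (dot (M k) u) 0 ^ 2 := by
  simp only [dot, relu, mulVec, sq]

lemma dot_relu_sub {m q : ℕ} (M : Fin m → Fin q → ℝ) (u v : Fin q → ℝ) :
    dot (relu (mulVec M u) - relu (mulVec M v)) (relu (mulVec M u) - relu (mulVec M v))
      = ∑ k, rowDist u v (M k) := by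
  simp only [dot, relu, mulVec, rowDist, Pi.sub_apply, sq]

lemma coe_two_div (m : ℕ) : (((2 / m : NNReal)) : ℝ) = 2 / m := by simp

/-- One-sided deviation of the squared norm after one layer; `ε = 1` is the upper tail and
`ε = -1` the lower tail. -/
lemma step_norm {m q : ℕ} (hm : 0 < m) (u : Fin q → ℝ) (h1 : 1 / 2 ≤ dot u u) (h2 : dot u u ≤ 2)
    (t : ℝ) (ht : 0 < t) (ht1 : t ≤ 1) (ε : ℝ) (hε : ε = 1 ∨ ε = -1) :
    gaussMat m q (2 / m)
      {M | t ≤ ε * (dot (relu (mulVec M u)) (relu (mulVec M u)) - dot u u)}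
      ≤ ENNReal.ofReal (Real.exp (-(m * (t ^ 2 / 128)))) := by
  have hm' : (0 : ℝ) < m := by exact_mod_cast hm
  have hε2 : ε ^ 2 = 1 := by rcases hε with rfl | rfl <;> norm_num
  have hεa : |ε| = 1 := by rcases hε with rfl | rfl <;> norm_num
  set N := dot u u with hN
  set f : (Fin q → ℝ) → ℝ := fun w => (ε * (t / 64) * m) * max (dot w u) 0 ^ 2
    + (-(ε * (t / 64) * N) - t / 64 * t) with hf
  have hdm := measurable_dot_right u
  have hfm : Measurable f := by fun_prop
  refine (measure_mono ?_).trans (row_chernoff (m := m) (2 / m : NNReal) f hfm (t ^ 2 / 128) ?_)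
  · intro M hM
    simp only [Set.mem_ofPred_eq] at hM ⊢
    rw [dot_relu_self] at hM
    have : ∑ k, f (M k)
        = (t / 64 * m) * (ε * ((∑ k, max (dot (M k) u) 0 ^ 2) - N) - t) := by
      simp only [hf, Finset.sum_add_distrib, ← Finset.mul_sum]
      simp; ring
    rw [this]
    exact mul_nonneg (by positivity) (by linarith)
  · have hV : ((2 / m : NNReal) * N.toNNReal) ≠ 0 := by
      refine mul_ne_zero (by positivity) ?_
      simp only [ne_eq, Real.toNNReal_eq_zero, not_le]; linarith
    have hVc : (((2 / m : NNReal) * N.toNNReal : NNReal) : ℝ) = 2 / m * N := by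
      rw [NNReal.coe_mul, coe_two_div, Real.coe_toNNReal _ (by linarith)]
    have hθV : (ε * (t / 64) * m) * (((2 / m : NNReal) * N.toNNReal : NNReal) : ℝ)
        = ε * (t * N / 32) := by
      rw [hVc]; field_simp; ring
    have hmgf := gauss_relu_mgf _ hV (ε * (t / 64) * m) (by
      rw [hθV, abs_mul, hεa, one_mul, abs_of_nonneg (by positivity)]; nlinarith)
    rw [hθV, ← dot_law, lintegral_map (by fun_prop) hdm] at hmgf
    simp only [hf]
    simp_rw [Real.exp_add, ENNReal.ofReal_mul (Real.exp_pos _).le]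
    rw [lintegral_mul_const _ (by fun_prop)]
    refine (mul_le_mul_left hmgf _).trans ?_
    rw [← ENNReal.ofReal_mul (Real.exp_pos _).le, ← Real.exp_add]
    apply ENNReal.ofReal_le_ofReal
    apply Real.exp_le_exp.2
    have : (ε * (t * N / 32)) ^ 2 = (t * N / 32) ^ 2 := by rw [mul_pow, hε2, one_mul]
    rw [this]
    have hN2 : N ^ 2 ≤ 4 := by nlinarith
    nlinarith [mul_le_mul_of_nonneg_left hN2 (sq_nonneg t)]

/-- Lower deviation of the squared distance after one layer. -/
lemma step_dist {m q : ℕ} (hm : 0 < m) (u v : Fin q → ℝ) (hD : dot (u - v) (u - v) ≤ 8)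
    (t : ℝ) (ht : 0 < t) :
    gaussMat m q (2 / m)
      {M | dot (relu (mulVec M u) - relu (mulVec M v)) (relu (mulVec M u) - relu (mulVec M v))
        ≤ dot (u - v) (u - v) - m * (∫ w, crossLoss u v w ∂(rowG q (2 / m))) - t}
      ≤ ENNReal.ofReal (Real.exp (-(m * (t ^ 2 / 40960)))) := by
  have hm' : (0 : ℝ) < m := by exact_mod_cast hm
  set D := dot (u - v) (u - v) with hDdef
  have hD0 : 0 ≤ D := dot_self_nonneg _
  set R := ∫ w, crossLoss u v w ∂(rowG q (2 / m)) with hR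
  set f : (Fin q → ℝ) → ℝ := fun w => -((t / 20480 * m) * rowDist u v w)
    + t / 20480 * (D - m * R - t) with hf
  have hdm := measurable_rowDist u v
  have hfm : Measurable f := by fun_prop
  refine (measure_mono ?_).trans (row_chernoff (m := m) (2 / m : NNReal) f hfm (t ^ 2 / 40960) ?_)
  · intro M hM
    simp only [Set.mem_ofPred_eq] at hM ⊢
    rw [dot_relu_sub] at hM
    have : ∑ k, f (M k)
        = (t / 20480 * m) * (D - m * R - t - ∑ k, rowDist u v (M k)) := by
      simp only [hf, Finset.sum_add_distrib, Finset.sum_neg_distrib, ← Finset.mul_sum]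
      simp; ring
    rw [this]
    exact mul_nonneg (by positivity) (by linarith)
  · have hmgf := rowDist_mgf (2 / m : NNReal) u v (t / 20480 * m) (by positivity)
    rw [← hR, ← hDdef, coe_two_div] at hmgf
    simp only [hf]
    simp_rw [Real.exp_add, ENNReal.ofReal_mul (Real.exp_pos _).le]
    rw [lintegral_mul_const _ (by fun_prop)]
    refine (mul_le_mul_left hmgf _).trans ?_
    rw [← ENNReal.ofReal_mul (Real.exp_pos _).le, ← Real.exp_add]
    apply ENNReal.ofReal_le_ofReal
    apply Real.exp_le_exp.2
    have e1 : t / 20480 * m * (2 / m * D / 2 - R) = t / 20480 * (D - m * R) := by field_simp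
    have e2 : 40 * (t / 20480 * m) ^ 2 * (2 / m * D) ^ 2 = 160 * (t / 20480) ^ 2 * D ^ 2 := by
      field_simp; ring
    rw [e1, e2]
    have hD2 : D ^ 2 ≤ 64 := by nlinarith
    nlinarith [mul_le_mul_of_nonneg_left hD2 (sq_nonneg t)]

/-- One layer behaves well on the pair `(u, v) ↦ (u', v')`: squared norms move by at most `δ³`,
and the squared distance drops by `O(δ³)` unless it stays above `δ²`. -/
def StepGood {p q : ℕ} (δ : ℝ) (u v : Fin p → ℝ) (u' v' : Fin q → ℝ) : Prop :=
  |dot u' u' - dot u u| ≤ δ ^ 3 ∧ |dot v' v' - dot v v| ≤ δ ^ 3 ∧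
    min (dot (u - v) (u - v) - 2593 * δ ^ 3) (δ ^ 2) ≤ dot (u' - v') (u' - v')

lemma dot_sub_self_le {q : ℕ} (u v : Fin q → ℝ) :
    dot (u - v) (u - v) ≤ 2 * (dot u u + dot v v) := by
  simp only [dot, ← Finset.sum_add_distrib, Finset.mul_sum, Pi.sub_apply]
  exact Finset.sum_le_sum fun i _ => by nlinarith [sq_nonneg (u i + v i)]

/-- The one-layer estimate: four norm deviations and one distance deviation are excluded, each with
failure probability at most `exp (-δ⁶ m / 40960)`. -/
lemma step_prob {m q : ℕ} (hm : 0 < m) (u v : Fin q → ℝ) (δ : ℝ) (hδ : 0 < δ) (hδ1 : δ ≤ 1 / 8)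
    (hu1 : 1 / 2 ≤ dot u u) (hu2 : dot u u ≤ 2) (hv1 : 1 / 2 ≤ dot v v) (hv2 : dot v v ≤ 2) :
    gaussMat m q (2 / m) {M | ¬ StepGood δ u v (relu (mulVec M u)) (relu (mulVec M v))}
      ≤ 5 * ENNReal.ofReal (Real.exp (-(δ ^ 6 * m / 40960))) := by
  have hm' : (0 : ℝ) < m := by exact_mod_cast hm
  have ht : 0 < δ ^ 3 := by positivity
  have ht1 : δ ^ 3 ≤ 1 := pow_le_one₀ hδ.le (by linarith)
  set P := ENNReal.ofReal (Real.exp (-(δ ^ 6 * m / 40960))) with hP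
  have hPle : ENNReal.ofReal (Real.exp (-(m * ((δ ^ 3) ^ 2 / 128)))) ≤ P := by
    apply ENNReal.ofReal_le_ofReal
    apply Real.exp_le_exp.2
    have : 0 < δ ^ 6 * m := by positivity
    have e : m * ((δ ^ 3) ^ 2 / 128) = δ ^ 6 * m / 128 := by ring
    rw [e]; linarith
  have A1 := (step_norm hm u hu1 hu2 _ ht ht1 1 (Or.inl rfl)).trans hPle
  have A2 := (step_norm hm u hu1 hu2 _ ht ht1 (-1) (Or.inr rfl)).trans hPle
  have A3 := (step_norm hm v hv1 hv2 _ ht ht1 1 (Or.inl rfl)).trans hPle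
  have A4 := (step_norm hm v hv1 hv2 _ ht ht1 (-1) (Or.inr rfl)).trans hPle
  have hD8 : dot (u - v) (u - v) ≤ 8 := by linarith [dot_sub_self_le u v]
  have A5 := step_dist hm u v hD8 _ ht
  have e5 : m * ((δ ^ 3) ^ 2 / 40960) = δ ^ 6 * m / 40960 := by ring
  rw [e5, ← hP] at A5
  set μ := gaussMat m q (2 / m)
  set E1 := {M : Fin m → Fin q → ℝ |
    δ ^ 3 ≤ 1 * (dot (relu (mulVec M u)) (relu (mulVec M u)) - dot u u)}
  set E2 := {M : Fin m → Fin q → ℝ |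
    δ ^ 3 ≤ (-1) * (dot (relu (mulVec M u)) (relu (mulVec M u)) - dot u u)}
  set E3 := {M : Fin m → Fin q → ℝ |
    δ ^ 3 ≤ 1 * (dot (relu (mulVec M v)) (relu (mulVec M v)) - dot v v)}
  set E4 := {M : Fin m → Fin q → ℝ |
    δ ^ 3 ≤ (-1) * (dot (relu (mulVec M v)) (relu (mulVec M v)) - dot v v)}
  set E5 := {M : Fin m → Fin q → ℝ |
    dot (relu (mulVec M u) - relu (mulVec M v)) (relu (mulVec M u) - relu (mulVec M v))
      ≤ dot (u - v) (u - v) - m * (∫ w, crossLoss u v w ∂(rowG q (2 / m))) - δ ^ 3}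
  have hsub : {M | ¬ StepGood δ u v (relu (mulVec M u)) (relu (mulVec M v))}
      ⊆ E1 ∪ E2 ∪ E3 ∪ E4 ∪ E5 := by
    intro M hM
    by_contra hcon
    simp only [Set.mem_union, not_or] at hcon
    obtain ⟨⟨⟨⟨n1, n2⟩, n3⟩, n4⟩, n5⟩ := hcon
    simp only [E1, E2, E3, E4, E5, Set.mem_ofPred_eq, not_le] at n1 n2 n3 n4 n5
    apply hM
    refine ⟨abs_le.2 ⟨by linarith, by linarith⟩, abs_le.2 ⟨by linarith, by linarith⟩, ?_⟩
    refine le_trans ?_ n5.le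
    -- For `D ≤ 4δ²` the cross loss is cubic; for larger `D` half of it survives, and `D/2 ≥ 2δ²`.
    rcases le_or_gt (dot (u - v) (u - v)) (4 * δ ^ 2) with hc | hc
    · refine (min_le_left _ _).trans ?_
      have := crossLoss_integral_cubic (2 / m : NNReal) (by positivity) u v δ hδ hδ1 hu1 hc
      rw [coe_two_div] at this
      have h := mul_le_mul_of_nonneg_left this hm'.le
      have e : m * (1296 * (2 / m) * δ ^ 3) = 2592 * δ ^ 3 := by field_simp; norm_num
      rw [e] at h
      linarith
    · refine (min_le_right _ _).trans ?_
      have := crossLoss_integral_le_half (2 / m : NNReal) u v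
      rw [coe_two_div] at this
      have h := mul_le_mul_of_nonneg_left this hm'.le
      have e : m * (2 / m * dot (u - v) (u - v) / 4) = dot (u - v) (u - v) / 2 := by
        field_simp; ring
      rw [e] at h
      nlinarith
  calc μ _ ≤ μ (E1 ∪ E2 ∪ E3 ∪ E4 ∪ E5) := measure_mono hsub
    _ ≤ μ E1 + μ E2 + μ E3 + μ E4 + μ E5 := by
      refine (measure_union_le _ _).trans (add_le_add_left ?_ _)
      refine (measure_union_le _ _).trans (add_le_add_left ?_ _)
      refine (measure_union_le _ _).trans (add_le_add_left ?_ _)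
      exact measure_union_le _ _
    _ ≤ P + P + P + P + P := by gcongr
    _ = 5 * P := by ring

/-! ### Failure events in the random network -/

/-- If every section of `S` along the coordinate `k` has measure at most `p`, then so has `S`. -/
lemma pi_measure_le_of_section {ι : Type*} [Fintype ι] [DecidableEq ι] {X : Type*}
    [MeasurableSpace X] (μ : ι → Measure X) [∀ i, IsProbabilityMeasure (μ i)]
    (k : ι) {S : Set (ι → X)} (hS : MeasurableSet S) (p : ENNReal)
    (h : ∀ w, μ k {y | Function.update w k y ∈ S} ≤ p) : Measure.pi μ S ≤ p := by
  have key := lintegral_le_of_lmarginal_le (μ := μ) {k}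
    (f := S.indicator 1) (g := fun _ => p) (measurable_one.indicator hS) measurable_const ?_
  · rw [lintegral_indicator_one hS] at key
    simpa using key
  · rw [lmarginal_singleton, lmarginal_singleton]
    intro w
    have hm : MeasurableSet {y | Function.update w k y ∈ S} :=
      (measurable_update w) hS
    have e : ∀ y, S.indicator (1 : (ι → X) → ENNReal) (Function.update w k y)
        = {y | Function.update w k y ∈ S}.indicator 1 y := by
      intro y; simp [Set.indicator]
    simp only [e]
    rw [lintegral_indicator_one hm]
    simpa using h w

lemma prod_measure_le_of_section {α β : Type*} [MeasurableSpace α] [MeasurableSpace β]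
    (μ : Measure α) (ν : Measure β) [IsProbabilityMeasure μ] [IsProbabilityMeasure ν]
    {S : Set (α × β)} (hS : MeasurableSet S) (p : ENNReal)
    (h : ∀ a, ν (Prod.mk a ⁻¹' S) ≤ p) : μ.prod ν S ≤ p := by
  rw [Measure.prod_apply hS]
  calc _ ≤ ∫⁻ _, p ∂μ := lintegral_mono h
    _ = p := by simp

instance gaussMat_prob (p q : ℕ) (v : NNReal) : IsProbabilityMeasure (gaussMat p q v) := by
  unfold gaussMat; infer_instance

instance initAW_prob (𝔡 m L : ℕ) : IsProbabilityMeasure (initAW 𝔡 m L) := by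
  unfold initAW; infer_instance

lemma hseq_succ {𝔡 m L : ℕ} (A : Fin m → Fin 𝔡 → ℝ) (W : Fin L → Fin m → Fin m → ℝ)
    (x : Fin 𝔡 → ℝ) (ℓ : ℕ) (h : ℓ < L) :
    hseq A W x (ℓ + 1) = relu (mulVec (W ⟨ℓ, h⟩) (hseq A W x ℓ)) := by
  have : ℓ + 1 ≤ L := h
  simp [hseq, this, Wat]

lemma hseq_update {𝔡 m L : ℕ} (A : Fin m → Fin 𝔡 → ℝ) (W : Fin L → Fin m → Fin m → ℝ)
    (x : Fin 𝔡 → ℝ) (k : Fin L) (Y : Fin m → Fin m → ℝ) (ℓ : ℕ) (h : ℓ ≤ k) :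
    hseq A (Function.update W k Y) x ℓ = hseq A W x ℓ := by
  induction ℓ with
  | zero => rfl
  | succ ℓ ih =>
    have hl : ℓ < L := by omega
    rw [hseq_succ _ _ _ _ hl, hseq_succ _ _ _ _ hl, ih (by omega), Function.update_of_ne]
    intro e
    have := congrArg Fin.val e
    simp at this
    omega

lemma measurable_relu_mulVec {α : Type*} [MeasurableSpace α] {p q : ℕ}
    {M : α → Fin p → Fin q → ℝ} {v : α → Fin q → ℝ} (hM : Measurable M) (hv : Measurable v) :
    Measurable fun a => relu (mulVec (M a) (v a)) := by
  unfold relu mulVec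
  fun_prop

lemma measurable_hseq {𝔡 m L : ℕ} (x : Fin 𝔡 → ℝ) (ℓ : ℕ) (h : ℓ ≤ L) :
    Measurable fun z : (Fin m → Fin 𝔡 → ℝ) × (Fin L → Fin m → Fin m → ℝ) =>
      hseq z.1 z.2 x ℓ := by
  induction ℓ with
  | zero => exact measurable_relu_mulVec measurable_fst measurable_const
  | succ ℓ ih =>
    simp_rw [hseq_succ _ _ _ _ (show ℓ < L from h)]
    exact measurable_relu_mulVec (by fun_prop) (ih (by omega))

lemma measurable_dot {α : Type*} [MeasurableSpace α] {p : ℕ}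
    {u v : α → Fin p → ℝ} (hu : Measurable u) (hv : Measurable v) :
    Measurable fun a => dot (u a) (v a) := by
  unfold dot
  fun_prop

lemma measurableSet_stepGood {α : Type*} [MeasurableSpace α] {p q : ℕ} (δ : ℝ)
    {u v : α → Fin p → ℝ} {u' v' : α → Fin q → ℝ} (hu : Measurable u) (hv : Measurable v)
    (hu' : Measurable u') (hv' : Measurable v') :
    MeasurableSet {a | StepGood δ (u a) (v a) (u' a) (v' a)} := by
  have h1 := measurable_dot hu hu
  have h2 := measurable_dot hv hv
  have h3 := measurable_dot hu' hu'
  have h4 := measurable_dot hv' hv'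
  have h5 := measurable_dot (hu.sub hv) (hu.sub hv)
  have h6 := measurable_dot (hu'.sub hv') (hu'.sub hv')
  refine (measurableSet_le (h3.sub h1).abs measurable_const).inter
    ((measurableSet_le (h4.sub h2).abs measurable_const).inter
      (measurableSet_le ((h5.sub_const _).min measurable_const) h6))

/-- The squared norm of a layer vector is within the range in which the one-layer estimate
applies. -/
def NormOK {p : ℕ} (u : Fin p → ℝ) : Prop := 1 / 2 ≤ dot u u ∧ dot u u ≤ 2

/-- Failure of the one-layer estimate when passing from layer `ℓ` to layer `ℓ + 1`, while the
norms at layer `ℓ` are still under control. -/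
def badStep {𝔡 m L : ℕ} (δ : ℝ) (x y : Fin 𝔡 → ℝ) (ℓ : ℕ) :
    Set ((Fin m → Fin 𝔡 → ℝ) × (Fin L → Fin m → Fin m → ℝ)) :=
  {z | (NormOK (hseq z.1 z.2 x ℓ) ∧ NormOK (hseq z.1 z.2 y ℓ)) ∧
    ¬ StepGood δ (hseq z.1 z.2 x ℓ) (hseq z.1 z.2 y ℓ)
      (hseq z.1 z.2 x (ℓ + 1)) (hseq z.1 z.2 y (ℓ + 1))}

/-- Failure of the one-layer estimate for the input layer. -/
def badInput {𝔡 m L : ℕ} (δ : ℝ) (x y : Fin 𝔡 → ℝ) :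
    Set ((Fin m → Fin 𝔡 → ℝ) × (Fin L → Fin m → Fin m → ℝ)) :=
  {z | ¬ StepGood δ x y (hseq z.1 z.2 x 0) (hseq z.1 z.2 y 0)}

lemma badInput_prob {𝔡 m L : ℕ} (hm : 0 < m) (δ : ℝ) (hδ : 0 < δ) (hδ1 : δ ≤ 1 / 8)
    (x y : Fin 𝔡 → ℝ) (hx : NormOK x) (hy : NormOK y) :
    initAW 𝔡 m L (badInput δ x y)
      ≤ 5 * ENNReal.ofReal (Real.exp (-(δ ^ 6 * m / 40960))) := by
  have e : (badInput δ x y : Set ((Fin m → Fin 𝔡 → ℝ) × (Fin L → Fin m → Fin m → ℝ)))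
      = {M | ¬ StepGood δ x y (relu (mulVec M x)) (relu (mulVec M y))} ×ˢ Set.univ := by
    ext z; simp [badInput, hseq]
  rw [e, initAW, Measure.prod_prod, measure_univ, mul_one]
  exact step_prob hm x y δ hδ hδ1 hx.1 hx.2 hy.1 hy.2

lemma badStep_prob {𝔡 m L : ℕ} (hm : 0 < m) (δ : ℝ) (hδ : 0 < δ) (hδ1 : δ ≤ 1 / 8)
    (x y : Fin 𝔡 → ℝ) (ℓ : ℕ) (hℓ : ℓ < L) :
    initAW 𝔡 m L (badStep δ x y ℓ)
      ≤ 5 * ENNReal.ofReal (Real.exp (-(δ ^ 6 * m / 40960))) := by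
  have hS : MeasurableSet (badStep δ x y ℓ :
      Set ((Fin m → Fin 𝔡 → ℝ) × (Fin L → Fin m → Fin m → ℝ))) := by
    have a1 := measurable_hseq (m := m) x ℓ hℓ.le
    have a2 := measurable_hseq (m := m) y ℓ hℓ.le
    have a3 := measurable_hseq (m := m) x (ℓ + 1) hℓ
    have a4 := measurable_hseq (m := m) y (ℓ + 1) hℓ
    have b1 := measurable_dot a1 a1
    have b2 := measurable_dot a2 a2
    exact (((measurableSet_le measurable_const b1).inter (measurableSet_le b1 measurable_const)).inter
      ((measurableSet_le measurable_const b2).inter (measurableSet_le b2 measurable_const))).inter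
      (measurableSet_stepGood δ a1 a2 a3 a4).compl
  refine prod_measure_le_of_section _ _ hS _ fun A => ?_
  refine pi_measure_le_of_section _ ⟨ℓ, hℓ⟩ (measurable_prodMk_left hS) _ fun W => ?_
  by_cases hok : NormOK (hseq A W x ℓ) ∧ NormOK (hseq A W y ℓ)
  · refine le_trans (measure_mono ?_) (step_prob hm (hseq A W x ℓ) (hseq A W y ℓ) δ hδ hδ1
      hok.1.1 hok.1.2 hok.2.1 hok.2.2)
    intro Y hY
    have h := hY.2
    simp only [hseq_succ _ _ _ _ hℓ, Function.update_self] at h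
    rwa [hseq_update A W x ⟨ℓ, hℓ⟩ Y ℓ le_rfl, hseq_update A W y ⟨ℓ, hℓ⟩ Y ℓ le_rfl] at h
  · refine le_trans (le_of_eq ?_) zero_le
    convert measure_empty (μ := gaussMat m m (2 / m))
    rw [Set.eq_empty_iff_forall_notMem]
    intro Y hY
    have h := hY.1
    simp only at h
    rw [hseq_update A W x ⟨ℓ, hℓ⟩ Y ℓ le_rfl, hseq_update A W y ⟨ℓ, hℓ⟩ Y ℓ le_rfl] at h
    exact hok h

/-! ### Propagation through the layers and the union bound -/

lemma l2_sq {p : ℕ} (v : Fin p → ℝ) : l2 v ^ 2 = dot v v := by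
  rw [l2, Real.sq_sqrt (Finset.sum_nonneg fun _ _ => sq_nonneg _)]
  simp [dot, sq]

lemma l2_eq_sqrt {p : ℕ} (v : Fin p → ℝ) : l2 v = Real.sqrt (dot v v) := by
  simp [l2, dot, sq]

lemma dot_sub_sub_self {p : ℕ} (u v : Fin p → ℝ) :
    dot (u - v) (u - v) = dot u u + dot v v - 2 * dot u v := by
  simp only [dot, Pi.sub_apply, Finset.mul_sum, ← Finset.sum_add_distrib,
    ← Finset.sum_sub_distrib]
  exact Finset.sum_congr rfl fun i _ => by ring

lemma hseq_nonneg {𝔡 m L : ℕ} (A : Fin m → Fin 𝔡 → ℝ) (W : Fin L → Fin m → Fin m → ℝ)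
    (x : Fin 𝔡 → ℝ) (ℓ : ℕ) (k : Fin m) : 0 ≤ hseq A W x ℓ k := by
  induction ℓ with
  | zero => exact le_max_right _ _
  | succ ℓ ih =>
    unfold hseq
    split_ifs
    · exact le_max_right _ _
    · exact ih

/-- Two nonnegative vectors of nearly unit norm whose distance is not much below `δ` have residual at
least `δ / 2` after projecting out one of them: with `N = ‖u‖²`, `N' = ‖v‖²`, `D = ‖u - v‖²`
the squared residual `Q` satisfies `4 Q N = 2 D (N + N') - D² - (N - N')²`, and `D ≤ N + N'`
by nonnegativity. -/
lemma residual_bound {p : ℕ} (u v : Fin p → ℝ) (hu : ∀ k, 0 ≤ u k) (hv : ∀ k, 0 ≤ v k)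
    (δ : ℝ) (hδ : 0 < δ) (hδ1 : δ ≤ 1 / 10)
    (hN : |dot u u - 1| ≤ δ ^ 2 / 10) (hN' : |dot v v - 1| ≤ δ ^ 2 / 10)
    (hD : 9 / 10 * δ ^ 2 ≤ dot (u - v) (u - v)) :
    δ / 2 ≤ l2 (fun k => v k - (dot u v / l2 u ^ 2) * u k) := by
  rw [l2_sq, l2_eq_sqrt]
  apply Real.le_sqrt_of_sq_le
  have hP : 0 ≤ dot u v := Finset.sum_nonneg fun k _ => mul_nonneg (hu k) (hv k)
  have hDe := dot_sub_sub_self u v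
  have hδ2 : δ ^ 2 ≤ 1 / 100 := by nlinarith
  rw [abs_le] at hN hN'
  have hNpos : 0 < dot u u := by linarith
  have hQ : dot (fun k => v k - (dot u v / dot u u) * u k)
      (fun k => v k - (dot u v / dot u u) * u k)
      = dot v v - dot u v ^ 2 / dot u u := by
    have : ∀ c : ℝ, dot (fun k => v k - c * u k) (fun k => v k - c * u k)
        = dot v v - 2 * c * dot u v + c ^ 2 * dot u u := by
      intro c
      simp only [dot, Finset.mul_sum, ← Finset.sum_add_distrib, ← Finset.sum_sub_distrib]
      exact Finset.sum_congr rfl fun i _ => by ring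
    rw [this]
    field_simp
    ring
  rw [hQ]
  set N := dot u u
  set N' := dot v v
  set P := dot u v
  set D := dot (u - v) (u - v)
  have e : N' - P ^ 2 / N = (N * N' - P ^ 2) / N := by field_simp
  rw [e, le_div_iff₀ hNpos]
  have hP' : P = (N + N' - D) / 2 := by linarith
  have h1 : D * (N + N') ≤ 4 * (N * N' - P ^ 2) + (N - N') ^ 2 := by
    have hDnn : 0 ≤ D := by nlinarith
    have : D * D ≤ D * (N + N') := mul_le_mul_of_nonneg_left (by linarith) hDnn
    rw [hP']
    nlinarith
  have h2 : (N - N') ^ 2 ≤ (δ ^ 2 / 5) ^ 2 := by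
    apply sq_le_sq'
    · linarith
    · linarith
  have h3 : (δ ^ 2 / 5) ^ 2 ≤ δ ^ 2 / 2500 := by nlinarith [sq_nonneg δ]
  have h4 : 9 / 10 * δ ^ 2 * (19 / 10) ≤ D * (N + N') := by
    apply mul_le_mul hD (by linarith) (by norm_num)
    nlinarith
  have h5 : (δ / 2) ^ 2 * N ≤ (δ / 2) ^ 2 * (11 / 10) :=
    mul_le_mul_of_nonneg_left (by linarith) (sq_nonneg _)
  nlinarith [sq_nonneg δ]

/-- Off the bad events, the squared norms drift by at most `δ³` and the squared distance drops
by at most `2593 δ³` per layer. -/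
lemma good_layers {𝔡 m L : ℕ} (A : Fin m → Fin 𝔡 → ℝ) (W : Fin L → Fin m → Fin m → ℝ)
    (x y : Fin 𝔡 → ℝ) (δ : ℝ) (hδ : 0 < δ) (hx : dot x x = 1) (hy : dot y y = 1)
    (hD : δ ^ 2 ≤ dot (x - y) (x - y)) (hsmall : (L + 1) * δ ^ 3 ≤ 1 / 2)
    (h0 : (A, W) ∉ badInput δ x y) (hs : ∀ ℓ < L, (A, W) ∉ badStep δ x y ℓ)
    (ℓ : ℕ) (hℓ : ℓ ≤ L) :
    |dot (hseq A W x ℓ) (hseq A W x ℓ) - 1| ≤ (ℓ + 1) * δ ^ 3 ∧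
    |dot (hseq A W y ℓ) (hseq A W y ℓ) - 1| ≤ (ℓ + 1) * δ ^ 3 ∧
    δ ^ 2 - (ℓ + 1) * (2593 * δ ^ 3)
      ≤ dot (hseq A W x ℓ - hseq A W y ℓ) (hseq A W x ℓ - hseq A W y ℓ) := by
  have hδ3 : 0 < δ ^ 3 := by positivity
  induction ℓ with
  | zero =>
    have h : StepGood δ x y (hseq A W x 0) (hseq A W y 0) := not_not.1 h0
    obtain ⟨a, b, c⟩ := h
    rw [hx] at a
    rw [hy] at b
    refine ⟨by simpa using a, by simpa using b, le_trans (le_min ?_ ?_) c⟩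
    · push_cast; linarith
    · push_cast; linarith
  | succ ℓ ih =>
    obtain ⟨a, b, c⟩ := ih (by omega)
    have hℓ' : ((ℓ : ℝ) + 1) * δ ^ 3 ≤ 1 / 2 := by
      refine le_trans (mul_le_mul_of_nonneg_right ?_ hδ3.le) hsmall
      have : ((ℓ + 1 : ℕ) : ℝ) ≤ L := by exact_mod_cast hℓ
      push_cast at this
      linarith
    have hg := hs ℓ (by omega)
    have ok1 : NormOK (hseq A W x ℓ) := by
      rw [abs_le] at a; constructor <;> linarith
    have ok2 : NormOK (hseq A W y ℓ) := by
      rw [abs_le] at b; constructor <;> linarith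
    have h : StepGood δ (hseq A W x ℓ) (hseq A W y ℓ) (hseq A W x (ℓ + 1))
        (hseq A W y (ℓ + 1)) := by
      by_contra hc
      exact hg ⟨⟨ok1, ok2⟩, hc⟩
    obtain ⟨a', b', c'⟩ := h
    rw [abs_le] at a b a' b'
    push_cast
    refine ⟨abs_le.2 ⟨by linarith, by linarith⟩, abs_le.2 ⟨by linarith, by linarith⟩,
      le_trans (le_min ?_ ?_) c'⟩
    · linarith
    · have : 0 ≤ ((ℓ : ℝ) + 1 + 1) * (2593 * δ ^ 3) := by positivity
      linarith

/-- The union bound over `n²` pairs and `L + 1` layers is absorbed by the lower bound on `m`. -/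
lemma union_numeric (n L m : ℕ) (hL : 2 ≤ L) (hn : 0 < n) (δ : ℝ) (hδ : 0 < δ)
    (hmb : 10 ^ 6 * (L : ℝ) * Real.log ((n : ℝ) * (L : ℝ)) / δ ^ 6 ≤ (m : ℝ)) :
    (n : ℝ) * n * (L + 1) * (5 * Real.exp (-(δ ^ 6 * m / 40960)))
      ≤ Real.exp (-(δ ^ 6 * (m : ℝ) / (10 ^ 6 * (L : ℝ)))) := by
  have hn1 : (1 : ℝ) ≤ n := by exact_mod_cast hn
  have hL2 : (2 : ℝ) ≤ L := by exact_mod_cast hL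
  set T := δ ^ 6 * (m : ℝ) with hT
  have hT0 : 0 ≤ T := by positivity
  have hlog : Real.log (n * L) ≤ T / (10 ^ 6 * L) := by
    rw [div_le_iff₀ (by positivity)] at hmb
    rw [le_div_iff₀ (by positivity)]
    nlinarith
  have hcount : (n : ℝ) * n * (L + 1) * 5 ≤ (n * L) ^ 4 := by
    have h1 : (L + 1 : ℝ) * 5 ≤ L ^ 4 := by
      nlinarith [sq_nonneg ((L : ℝ) ^ 2 - 4), sq_nonneg ((L : ℝ) - 2)]
    have h2 : (n : ℝ) * n ≤ n ^ 4 := by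
      have : (n : ℝ) ^ 2 ≤ n ^ 4 := pow_le_pow_right₀ hn1 (by norm_num)
      nlinarith
    calc (n : ℝ) * n * (L + 1) * 5 = (n * n) * ((L + 1) * 5) := by ring
      _ ≤ n ^ 4 * L ^ 4 := mul_le_mul h2 h1 (by positivity) (by positivity)
      _ = _ := by ring
  have hexp : ((n : ℝ) * L) ^ 4 = Real.exp (4 * Real.log (n * L)) := by
    rw [mul_comm 4, Real.exp_mul, Real.exp_log (by positivity)]
    norm_cast
  have hfin : T / (10 ^ 6 * L) * 5 ≤ T / 40960 := by
    rw [div_mul_eq_mul_div, div_le_div_iff₀ (by positivity) (by norm_num)]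
    nlinarith
  calc (n : ℝ) * n * (L + 1) * (5 * Real.exp (-(T / 40960)))
      = ((n : ℝ) * n * (L + 1) * 5) * Real.exp (-(T / 40960)) := by ring
    _ ≤ Real.exp (4 * Real.log (n * L)) * Real.exp (-(T / 40960)) := by
      rw [← hexp]; gcongr
    _ = Real.exp (4 * Real.log (n * L) + -(T / 40960)) := by rw [Real.exp_add]
    _ ≤ _ := by
      apply Real.exp_le_exp.2
      linarith

/-- Lemma 7.4, δ-separateness propagates through the layers. -/
theorem statement10 :
    ∃ C : ℝ, 1 < C ∧
      ∀ (𝔡 m L n : ℕ) (h𝔡 : 0 < 𝔡) (hL : 2 ≤ L) (hm : 0 < m) (hn : 0 < n)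
        (x : Fin n → Fin 𝔡 → ℝ) (δ : ℝ),
        0 < δ → δ ≤ 1 / (C * L) →
        C * (L : ℝ) * Real.log ((n : ℝ) * (L : ℝ)) / δ ^ 6 ≤ (m : ℝ) →
        (∀ i, l2 (x i) = 1) →
        (∀ i, x i ⟨𝔡 - 1, by omega⟩ = 1 / Real.sqrt 2) →
        (∀ i j, i ≠ j → δ ≤ l2 (x i - x j)) →
        ENNReal.ofReal (1 - Real.exp (-(δ ^ 6 * (m : ℝ) / (C * (L : ℝ))))) ≤
          initAW 𝔡 m L
            {z | ∀ i j : Fin n, i ≠ j → ∀ ℓ : ℕ, ℓ ≤ L →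
              δ / 2 ≤
                l2 (fun k =>
                  hseq z.1 z.2 (x j) ℓ k -
                    (dot (hseq z.1 z.2 (x i) ℓ) (hseq z.1 z.2 (x j) ℓ) /
                        l2 (hseq z.1 z.2 (x i) ℓ) ^ 2) *
                      hseq z.1 z.2 (x i) ℓ k)} := by
  -- `5 / (C L) ≤ 1 / 40960` and `2 * 2593 * L * δ ≤ 1 / 10` both hold with room to spare.
  refine ⟨10 ^ 6, by norm_num, ?_⟩
  intro 𝔡 m L n h𝔡 hL hm hn x δ hδ hδL hmb hx1 _ hsep
  have hL2 : (2 : ℝ) ≤ L := by exact_mod_cast hL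
  have hLδ : δ * (10 ^ 6 * L) ≤ 1 := by rwa [le_div_iff₀ (by positivity)] at hδL
  have hδ1 : δ ≤ 1 / 2000000 := by nlinarith
  have hdot1 : ∀ i, dot (x i) (x i) = 1 := fun i => by rw [← l2_sq, hx1]; norm_num
  have hok : ∀ i, NormOK (x i) := fun i => by
    constructor <;> rw [hdot1] <;> norm_num
  have hdrift : ((L : ℝ) + 1) * δ ^ 3 ≤ 2 / 10 ^ 6 * δ ^ 2 := by
    have : ((L : ℝ) + 1) * δ ≤ 2 / 10 ^ 6 := by nlinarith
    calc ((L : ℝ) + 1) * δ ^ 3 = (((L : ℝ) + 1) * δ) * δ ^ 2 := by ring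
      _ ≤ _ := mul_le_mul_of_nonneg_right this (sq_nonneg _)
  have hδ2 : δ ^ 2 ≤ 1 := by nlinarith
  set μ := initAW 𝔡 m L with hμ
  set P := 5 * ENNReal.ofReal (Real.exp (-(δ ^ 6 * m / 40960))) with hP
  set G : Set ((Fin m → Fin 𝔡 → ℝ) × (Fin L → Fin m → Fin m → ℝ)) :=
    {z | ∀ i j : Fin n, i ≠ j → ∀ ℓ : ℕ, ℓ ≤ L →
              δ / 2 ≤
                l2 (fun k =>
                  hseq z.1 z.2 (x j) ℓ k -
                    (dot (hseq z.1 z.2 (x i) ℓ) (hseq z.1 z.2 (x j) ℓ) /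
                        l2 (hseq z.1 z.2 (x i) ℓ) ^ 2) *
                      hseq z.1 z.2 (x i) ℓ k)} with hG
  set B : Set ((Fin m → Fin 𝔡 → ℝ) × (Fin L → Fin m → Fin m → ℝ)) :=
    ⋃ i : Fin n, ⋃ j : Fin n, (badInput δ (x i) (x j) ∪
      ⋃ ℓ : Fin L, badStep δ (x i) (x j) ℓ) with hB
  have hBprob : μ B ≤ ENNReal.ofReal (Real.exp (-(δ ^ 6 * (m : ℝ) / (10 ^ 6 * (L : ℝ))))) := by
    calc μ B ≤ ∑ _i : Fin n, ∑ _j : Fin n, (P + ∑ _ℓ : Fin L, P) := by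
          refine (measure_iUnion_fintype_le _ _).trans (Finset.sum_le_sum fun i _ => ?_)
          refine (measure_iUnion_fintype_le _ _).trans (Finset.sum_le_sum fun j _ => ?_)
          refine (measure_union_le _ _).trans (add_le_add ?_ ?_)
          · exact badInput_prob hm δ hδ (by linarith) _ _ (hok i) (hok j)
          · refine (measure_iUnion_fintype_le _ _).trans (Finset.sum_le_sum fun ℓ _ => ?_)
            exact badStep_prob hm δ hδ (by linarith) _ _ ℓ ℓ.2
      _ = ENNReal.ofReal ((n : ℝ) * n * (L + 1) *
            (5 * Real.exp (-(δ ^ 6 * m / 40960)))) := by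
          rw [ENNReal.ofReal_mul (by positivity), ENNReal.ofReal_mul (by positivity),
            ENNReal.ofReal_mul (by positivity), ENNReal.ofReal_mul (by norm_num),
            ENNReal.ofReal_add (by positivity) (by norm_num), ENNReal.ofReal_natCast,
            ENNReal.ofReal_natCast, ENNReal.ofReal_one,
            show ENNReal.ofReal 5 = 5 by simp, ← hP]
          simp only [Finset.sum_const, Finset.card_univ, Fintype.card_fin, nsmul_eq_mul]
          ring
      _ ≤ _ := ENNReal.ofReal_le_ofReal (union_numeric n L m hL hn δ hδ hmb)
  have hcover : Set.univ ⊆ G ∪ B := by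
    rintro ⟨A, W⟩ -
    by_cases hzB : (A, W) ∈ B
    · exact Or.inr hzB
    left
    intro i j hij ℓ hℓ
    simp only [hB, Set.mem_iUnion, Set.mem_union, not_exists, not_or] at hzB
    have hz := hzB i j
    obtain ⟨a, b, c⟩ := good_layers A W (x i) (x j) δ hδ (hdot1 i) (hdot1 j)
      (by
        rw [← l2_sq]
        exact pow_le_pow_left₀ hδ.le (hsep i j hij) 2)
      (by nlinarith) hz.1 (fun ℓ hℓ => hz.2 ⟨ℓ, hℓ⟩) ℓ hℓ
    have hle : ((ℓ : ℝ) + 1) * δ ^ 3 ≤ 2 / 10 ^ 6 * δ ^ 2 := by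
      refine le_trans (mul_le_mul_of_nonneg_right ?_ (by positivity)) hdrift
      have : (ℓ : ℝ) ≤ L := by exact_mod_cast hℓ
      linarith
    have hsq := sq_nonneg δ
    exact residual_bound _ _ (hseq_nonneg A W _ ℓ) (hseq_nonneg A W _ ℓ) δ hδ (by linarith)
      (by linarith) (by linarith) (by nlinarith)
  have htot : 1 ≤ μ G + μ B := by
    calc (1 : ENNReal) = μ Set.univ := measure_univ.symm
      _ ≤ μ (G ∪ B) := measure_mono hcover
      _ ≤ _ := measure_union_le _ _
  rw [ENNReal.ofReal_sub _ (Real.exp_pos _).le, ENNReal.ofReal_one]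
  exact tsub_le_iff_right.2 (htot.trans (add_le_add le_rfl hBprob))

end DNNPaper
end
end

section
/- (Sign changes and their contribution under perturbation of a Gaussian layer.) There exist absolute constants C, c > 0 such that the following holds. Let δ₂ ∈ [0, C] and δ_∞ ∈ [0, 1/(4√m)], and let W⁰ ∈ ℝ^{m×m} be a random matrix with i.i.d. N(0, 2/m) entries. For every fixed unit vector h⁰ ∈ ℝ^m, with probability at least 1 − e^{−c·m^{3/2}·δ_∞} over W⁰, the following holds for all g' ∈ ℝ^m that can be written as g' = g'_1 + g'_2 with ‖g'_1‖ ≤ δ₂ and ‖g'_2‖_∞ ≤ δ_∞: letting D' ∈ ℝ^{m×m} be the diagonal matrix with (D')_{kk} = 1[(W⁰h⁰ + g')_k ≥ 0] − 1[(W⁰h⁰)_k ≥ 0], and x = D'(W⁰h⁰ + g') ∈ ℝ^m, one has ‖x‖₀ ≤ ‖D'‖₀ ≤ C·(m·δ₂^{2/3} + δ_∞·m^{3/2}) and ‖x‖ ≤ C·(δ₂ + δ_∞^{3/2}·m^{3/4}). -/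
/-!
A coordinate changes sign only if `|(W⁰h⁰)_k| ≤ |g'_k|`. Put `s = δ₂^{2/3} / √m`. Then either
`|g'₁,k| > s`, which happens for at most `δ₂² / s² = m δ₂^{2/3}` coordinates (`card_large_le`), or
`|(W⁰h⁰)_k| ≤ s + δ_∞`. The coordinates of `W⁰h⁰` are i.i.d. `N(0, 2/m)` (`map_mulVec_gaussMat`),
so each is that small with probability at most `√m (s + δ_∞)` (`gaussian_small_ball`), and the
number of small ones is at most `3μ` outside an event of probability at most
`exp (-μ)`, where
`μ = m δ₂^{2/3} + m^{3/2} δ_∞` (`chernoff_count`). This gives at most `4μ` sign changes.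

At a sign change the new value is also at most `|g'_k|` in absolute value, hence
`‖x‖² ≤ 2 ‖g'₁‖² + 2 δ_∞² · 4μ`. Young's inequality bounds the mixed term
`m δ_∞² δ₂^{2/3}` by `δ₂² + δ_∞³ m^{3/2}` (`sign_change_bounds`). The constants are `C = 4`, `c = 1`.
-/

open MeasureTheory ProbabilityTheory

noncomputable section

namespace DNNPaper

/-! ### The network -/

variable {𝔡 m d L : ℕ}

/-! ### The law of `W⁰h⁰` -/

/-- A unit-vector combination of i.i.d. centred Gaussians has the same law as each of them. -/
lemma map_dot_gaussian {p : ℕ} (v : NNReal) (h : Fin p → ℝ) (hh : ∑ j, h j ^ 2 = 1) :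
    (Measure.pi fun _ : Fin p => gaussianReal 0 v).map (fun w => ∑ j, w j * h j) =
      gaussianReal 0 v := by
  have hmeas : Measurable fun w : Fin p → ℝ => ∑ j, w j * h j := by fun_prop
  have : IsProbabilityMeasure
      ((Measure.pi fun _ : Fin p => gaussianReal 0 v).map (fun w => ∑ j, w j * h j)) :=
    Measure.isProbabilityMeasure_map hmeas.aemeasurable
  refine Measure.ext_of_charFun (funext fun t => ?_)
  rw [charFun_apply_real, integral_map hmeas.aemeasurable (by fun_prop)]
  have e1 : ∀ w : Fin p → ℝ, Complex.exp ((t : ℂ) * ((∑ j, w j * h j : ℝ) : ℂ) * Complex.I) =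
      ∏ j, Complex.exp (((t * h j : ℝ) : ℂ) * (w j : ℂ) * Complex.I) := by
    intro w
    rw [← Complex.exp_sum]
    congr 1
    push_cast
    rw [Finset.mul_sum, Finset.sum_mul]
    exact Finset.sum_congr rfl fun j _ => by ring
  simp_rw [e1]
  rw [integral_fintype_prod_eq_prod (𝕜 := ℂ)
    (f := fun j (x : ℝ) => Complex.exp (((t * h j : ℝ) : ℂ) * (x : ℂ) * Complex.I))]
  simp_rw [← charFun_apply_real, charFun_gaussianReal]
  rw [← Complex.exp_sum]
  congr 1
  have hh' : ∑ j, ((h j : ℂ)) ^ 2 = 1 := by exact_mod_cast hh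
  have e2 : ∀ j, (((t * h j : ℝ) : ℂ) * ((0 : ℝ) : ℂ) * Complex.I -
      (v : ℂ) * ((t * h j : ℝ) : ℂ) ^ 2 / 2) = -((v : ℂ) * (t : ℂ) ^ 2 / 2) * (h j : ℂ) ^ 2 := by
    intro j; push_cast; ring
  rw [Finset.sum_congr rfl fun j _ => e2 j, ← Finset.mul_sum, hh']
  push_cast; ring

lemma map_mulVec_gaussMat {m : ℕ} (v : NNReal) (h : Fin m → ℝ) (hh : ∑ j, h j ^ 2 = 1) :
    (gaussMat m m v).map (fun W => mulVec W h) =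
      Measure.pi fun _ : Fin m => gaussianReal 0 v := by
  have hmeas : Measurable fun w : Fin m → ℝ => ∑ j, w j * h j := by fun_prop
  have hp : ∀ _ : Fin m, IsProbabilityMeasure
      ((Measure.pi fun _ : Fin m => gaussianReal 0 v).map (fun w => ∑ j, w j * h j)) :=
    fun _ => Measure.isProbabilityMeasure_map hmeas.aemeasurable
  have := Measure.pi_map_pi (μ := fun _ : Fin m => Measure.pi fun _ : Fin m => gaussianReal 0 v)
    (f := fun _ : Fin m => fun w : Fin m → ℝ => ∑ j, w j * h j)
    (fun _ => hmeas.aemeasurable)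
  simp_rw [map_dot_gaussian v h hh] at this
  exact this

/-- Small-ball estimate: the density of `N(0, 2/m)` is at most `√m / √(4π) ≤ √m / 2`. -/
lemma gaussian_small_ball {m : ℕ} (hm : 0 < m) {t : ℝ} (ht : 0 ≤ t) :
    (gaussianReal 0 (2 / m)).real {x | |x| ≤ t} ≤ t * √m := by
  have hm' : (0 : ℝ) < m := by exact_mod_cast hm
  have hv : (2 / m : NNReal) ≠ 0 := by positivity
  have hset : {x : ℝ | |x| ≤ t} = Set.Icc (-t) t := by
    ext x; simp [abs_le]
  have hpdf : ∀ x, gaussianPDF 0 (2 / m) x ≤ ENNReal.ofReal (√m / 2) := by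
    intro x
    unfold gaussianPDF
    apply ENNReal.ofReal_le_ofReal
    rw [gaussianPDFReal]
    have h1 : Real.exp (-(x - 0) ^ 2 / (2 * ((2 / m : NNReal) : ℝ))) ≤ 1 := by
      rw [Real.exp_le_one_iff]
      apply div_nonpos_of_nonpos_of_nonneg
      · nlinarith [sq_nonneg (x - 0)]
      · positivity
    have h2 : (√(2 * Real.pi * ((2 / m : NNReal) : ℝ)))⁻¹ ≤ √m / 2 := by
      rw [← Real.sqrt_inv]
      apply Real.sqrt_le_iff.mpr
      refine ⟨by positivity, ?_⟩
      rw [div_pow, Real.sq_sqrt hm'.le]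
      push_cast
      have : (2 * Real.pi * (2 / (m : ℝ)))⁻¹ = m / (4 * Real.pi) := by
        field_simp; norm_num
      rw [this]
      apply div_le_div_of_nonneg_left hm'.le (by norm_num)
      nlinarith [Real.pi_gt_three]
    calc _ ≤ (√m / 2) * 1 := by gcongr
      _ = _ := by ring
  have hle : gaussianReal 0 (2 / m) {x | |x| ≤ t} ≤ ENNReal.ofReal (t * √m) := by
    rw [gaussianReal_apply _ hv, hset]
    calc _ ≤ ∫⁻ _ in Set.Icc (-t) t, ENNReal.ofReal (√m / 2) := lintegral_mono hpdf
      _ = ENNReal.ofReal (√m / 2) * ENNReal.ofReal (t - -t) := by simp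
      _ = ENNReal.ofReal (t * √m) := by
        rw [← ENNReal.ofReal_mul (by positivity)]
        congr 1; ring
  exact ENNReal.toReal_le_of_le_ofReal (by positivity) hle

/-! ### A Chernoff bound for the number of small coordinates -/

/-- If each of `m` i.i.d. coordinates satisfies `|x| ≤ t` with probability at most `q`, at least
`3mq` of them do so with probability at most `exp (-mq)`: the first exponential moment of the
count is at most `exp ((e - 1)mq)`, and `e - 1 ≤ 2`. -/
lemma chernoff_count {m : ℕ} (ν : Measure ℝ) [IsProbabilityMeasure ν] {t q : ℝ}
    (hq : ν.real {x | |x| ≤ t} ≤ q) :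
    (Measure.pi fun _ : Fin m => ν).real
      {g | 3 * (m * q) ≤ ((Finset.univ.filter fun k => |g k| ≤ t).card : ℝ)} ≤
      Real.exp (-(m * q)) := by
  set S : Set ℝ := {x | |x| ≤ t} with hS
  have hSm : MeasurableSet S := measurableSet_le (by fun_prop) (by fun_prop)
  set f : ℝ → ℝ := fun x => 1 + S.indicator (fun _ => Real.exp 1 - 1) x with hf
  have he : 1 ≤ Real.exp 1 := by simp
  have hf0 : ∀ x, 1 ≤ f x := fun x => by
    have : 0 ≤ S.indicator (fun _ => Real.exp 1 - 1) x :=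
      Set.indicator_nonneg (fun _ _ => by linarith) x
    simp only [hf]; linarith
  have hf1 : ∀ x, f x = if |x| ≤ t then Real.exp 1 else 1 := fun x => by
    by_cases h : |x| ≤ t <;> simp [hf, hS, Set.indicator, h]
  have hfi : Integrable f ν :=
    (integrable_const _).add ((integrable_const _).indicator hSm)
  have hprod : ∀ g : Fin m → ℝ, ∏ k, f (g k) =
      Real.exp ((Finset.univ.filter fun k => |g k| ≤ t).card : ℝ) := by
    intro g
    simp_rw [hf1]
    rw [Finset.prod_ite, Finset.prod_const, Finset.prod_const_one, mul_one, ← Real.exp_nat_mul,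
      mul_one]
  have hint : ∫ x, f x ∂ν ≤ Real.exp (2 * q) := by
    have h1 : ∫ x, f x ∂ν = 1 + ν.real S * (Real.exp 1 - 1) := by
      rw [hf, integral_add (integrable_const _) ((integrable_const _).indicator hSm),
        integral_indicator hSm]
      simp
    have h0 : 0 ≤ ν.real S := measureReal_nonneg
    have h2 : Real.exp 1 - 1 ≤ 2 := by linarith [Real.exp_one_lt_d9]
    have h3 := Real.add_one_le_exp (2 * q)
    rw [h1]
    nlinarith
  have hint0 : 0 ≤ ∫ x, f x ∂ν := integral_nonneg fun x => zero_le_one.trans (hf0 x)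
  have hI : ∫ g, ∏ k, f (g k) ∂(Measure.pi fun _ : Fin m => ν) ≤ Real.exp (2 * (m * q)) := by
    rw [integral_fintype_prod_eq_prod (𝕜 := ℝ) (f := fun (_ : Fin m) => f), Finset.prod_const,
      Finset.card_univ, Fintype.card_fin]
    calc _ ≤ Real.exp (2 * q) ^ m := by gcongr
      _ = _ := by rw [← Real.exp_nat_mul]; congr 1; ring
  have hmk := mul_meas_ge_le_integral_of_nonneg
    (μ := Measure.pi fun _ : Fin m => ν) (f := fun g => ∏ k, f (g k))
    (Filter.Eventually.of_forall fun g => Finset.prod_nonneg fun k _ => by linarith [hf0 (g k)])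
    (Integrable.fintype_prod (f := fun (_ : Fin m) => f) fun _ => hfi)
    (Real.exp (3 * (m * q)))
  simp only [hprod, Real.exp_le_exp] at hmk
  simp only [hprod] at hI
  have h4 := hmk.trans hI
  have h5 : Real.exp (-(m * q)) = Real.exp (2 * (m * q)) / Real.exp (3 * (m * q)) := by
    rw [← Real.exp_sub]; congr 1; ring
  rw [h5, le_div_iff₀ (Real.exp_pos _), mul_comm]
  exact h4

/-! ### The deterministic part -/

/-- A sign change forces the perturbation to dominate both the old and the new value. -/
lemma abs_le_of_sign_change {u p : ℝ}
    (h : ((if 0 ≤ u + p then 1 else 0 : ℝ) - if 0 ≤ u then 1 else 0) ≠ 0) :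
    |u| ≤ |p| ∧ |u + p| ≤ |p| := by
  by_cases h1 : 0 ≤ u + p <;> by_cases h2 : 0 ≤ u <;> simp only [h1, h2, if_true, if_false] at h
  · simp at h
  · push Not at h2
    rw [abs_of_neg h2, abs_of_nonneg h1, abs_of_nonneg (by linarith : 0 ≤ p)]
    constructor <;> linarith
  · push Not at h1
    rw [abs_of_nonneg h2, abs_of_neg h1, abs_of_neg (by linarith : p < 0)]
    constructor <;> linarith
  · simp at h

/-- Chebyshev-type count: at most `a² r²` coordinates of a vector of norm at most `a³` exceed
`a² / r` in absolute value. -/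
lemma card_large_le {m : ℕ} {a r : ℝ} (ha : 0 ≤ a) (hr : 0 < r) (g : Fin m → ℝ)
    (hg : ∑ k, g k ^ 2 ≤ a ^ 6) :
    ((Finset.univ.filter fun k => a ^ 2 / r < |g k|).card : ℝ) ≤ r ^ 2 * a ^ 2 := by
  set T := Finset.univ.filter fun k => a ^ 2 / r < |g k| with hT
  rcases ha.eq_or_lt with h0 | hpos
  · have hz : ∀ k, g k = 0 := by
      intro k
      have h1 : g k ^ 2 ≤ ∑ k, g k ^ 2 :=
        Finset.single_le_sum (f := fun k => g k ^ 2) (fun i _ => sq_nonneg _) (Finset.mem_univ k)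
      have h2 : g k ^ 2 ≤ 0 := by
        rw [← h0] at hg; norm_num at hg; linarith
      exact pow_eq_zero_iff (two_ne_zero) |>.mp (le_antisymm h2 (sq_nonneg _))
    have : T = ∅ := by
      rw [hT]
      apply Finset.filter_false_of_mem
      intro k _
      rw [hz k, ← h0]; simp
    rw [this]; simp; positivity
  · have h1 : (T.card : ℝ) * (a ^ 2 / r) ^ 2 ≤ a ^ 6 := by
      calc _ = ∑ k ∈ T, (a ^ 2 / r) ^ 2 := by simp
        _ ≤ ∑ k ∈ T, g k ^ 2 := by
          apply Finset.sum_le_sum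
          intro k hk
          have hk' : a ^ 2 / r < |g k| := (Finset.mem_filter.mp hk).2
          rw [← sq_abs (g k)]
          gcongr
        _ ≤ ∑ k, g k ^ 2 :=
          Finset.sum_le_sum_of_subset_of_nonneg (Finset.subset_univ _) fun _ _ _ => sq_nonneg _
        _ ≤ a ^ 6 := hg
    have h2 : (T.card : ℝ) * (a ^ 2 / r) ^ 2 = T.card * a ^ 4 / r ^ 2 := by
      field_simp
    rw [h2, div_le_iff₀ (by positivity)] at h1
    have h3 : (0 : ℝ) < a ^ 4 := by positivity
    nlinarith

/-- The conclusions of the theorem on the good event, in the variables `a = δ₂^{1/3}`, `r = √m`,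
`d = δ_∞` and `b = δ_∞^{3/2} m^{3/4}`, in which all exponents are integers. -/
lemma sign_change_bounds {m : ℕ} {a r d b : ℝ} (ha : 0 ≤ a) (hr : 0 < r) (hd : 0 ≤ d)
    (hb : 0 ≤ b) (hbd : b ^ 2 = (d * r) ^ 3) (u g1 g2 : Fin m → ℝ)
    (hg1 : ∑ k, g1 k ^ 2 ≤ a ^ 6) (hg2 : ∀ k, |g2 k| ≤ d)
    (hN : ((Finset.univ.filter fun k => |u k| ≤ a ^ 2 / r + d).card : ℝ) ≤
      3 * (r ^ 2 * a ^ 2 + d * r ^ 3)) :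
    (l0 (fun k => (signOf (fun k' => u k' + (g1 + g2) k')) k - signOf u k) : ℝ) ≤
        4 * (r ^ 2 * a ^ 2 + d * r ^ 3) ∧
      l2 (fun k => ((signOf (fun k' => u k' + (g1 + g2) k')) k - signOf u k) *
        (u k + (g1 + g2) k)) ≤ 4 * (a ^ 3 + b) := by
  set D : Fin m → ℝ := fun k => (signOf (fun k' => u k' + (g1 + g2) k')) k - signOf u k with hD
  set T := Finset.univ.filter fun k => D k ≠ 0 with hT
  have hch : ∀ k, D k ≠ 0 → |u k| ≤ |g1 k + g2 k| ∧ |u k + (g1 k + g2 k)| ≤ |g1 k + g2 k| :=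
    fun k hk => abs_le_of_sign_change hk
  have hcard : (T.card : ℝ) ≤ 4 * (r ^ 2 * a ^ 2 + d * r ^ 3) := by
    have hsub : T ⊆ (Finset.univ.filter fun k => |u k| ≤ a ^ 2 / r + d) ∪
        (Finset.univ.filter fun k => a ^ 2 / r < |g1 k|) := by
      intro k hk
      have h1 := (hch k (Finset.mem_filter.mp hk).2).1
      simp only [Finset.mem_union, Finset.mem_filter, Finset.mem_univ, true_and]
      by_contra! hcon
      linarith [abs_add_le (g1 k) (g2 k), hg2 k, hcon.1, hcon.2]
    have h2 : (T.card : ℝ) ≤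
        ((Finset.univ.filter fun k => |u k| ≤ a ^ 2 / r + d).card : ℝ) +
          ((Finset.univ.filter fun k => a ^ 2 / r < |g1 k|).card : ℝ) := by
      exact_mod_cast (Finset.card_le_card hsub).trans (Finset.card_union_le _ _)
    have h3 := card_large_le ha hr g1 hg1
    have h4 : 0 ≤ d * r ^ 3 := by positivity
    linarith
  refine ⟨hcard, ?_⟩
  have hterm : ∀ k, (D k * (u k + (g1 + g2) k)) ^ 2 ≤
      2 * g1 k ^ 2 + if D k ≠ 0 then 2 * d ^ 2 else 0 := by
    intro k
    by_cases hk : D k = 0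
    · simp [hk]; positivity
    · have h1 := (hch k hk).2
      have hD1 : D k ^ 2 ≤ 1 := by
        simp only [hD, signOf]
        split_ifs <;> norm_num
      have h2 : (u k + (g1 k + g2 k)) ^ 2 ≤ (g1 k + g2 k) ^ 2 := sq_le_sq.mpr h1
      have h3 : g2 k ^ 2 ≤ d ^ 2 := sq_le_sq.mpr ((hg2 k).trans (le_abs_self d))
      rw [mul_pow, if_pos hk, Pi.add_apply]
      nlinarith [sq_nonneg (g1 k - g2 k), sq_nonneg (u k + (g1 k + g2 k))]
  have hsum : ∑ k, (D k * (u k + (g1 + g2) k)) ^ 2 ≤ 2 * a ^ 6 + T.card * (2 * d ^ 2) := by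
    calc _ ≤ ∑ k, (2 * g1 k ^ 2 + if D k ≠ 0 then 2 * d ^ 2 else 0) :=
          Finset.sum_le_sum fun k _ => hterm k
      _ = 2 * ∑ k, g1 k ^ 2 + T.card * (2 * d ^ 2) := by
        rw [Finset.sum_add_distrib, ← Finset.mul_sum, ← Finset.sum_filter, Finset.sum_const,
          nsmul_eq_mul]
      _ ≤ _ := by linarith
  unfold l2
  apply Real.sqrt_le_iff.mpr
  refine ⟨by positivity, hsum.trans ?_⟩
  -- The mixed term `y² a²`, with `y = δ_∞ √m`, is absorbed by Young's inequality.
  have hy : 0 ≤ d * r := by positivity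
  have hyoung : (d * r) ^ 2 * a ^ 2 ≤ (a ^ 2) ^ 3 + (d * r) ^ 3 := by
    rcases le_total (a ^ 2) (d * r) with h | h
    · have : (d * r) ^ 2 * a ^ 2 ≤ (d * r) ^ 2 * (d * r) := by gcongr
      nlinarith [pow_nonneg (sq_nonneg a) 3]
    · have : (d * r) ^ 2 * a ^ 2 ≤ (a ^ 2) ^ 2 * a ^ 2 := by gcongr
      nlinarith [pow_nonneg hy 3]
  have hc2 : (T.card : ℝ) * (2 * d ^ 2) ≤ 4 * (r ^ 2 * a ^ 2 + d * r ^ 3) * (2 * d ^ 2) := by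
    gcongr
  have e1 : 4 * (r ^ 2 * a ^ 2 + d * r ^ 3) * (2 * d ^ 2) =
      8 * ((d * r) ^ 2 * a ^ 2) + 8 * (d * r) ^ 3 := by ring
  have e2 : (4 * (a ^ 3 + b)) ^ 2 = 16 * a ^ 6 + 32 * (a ^ 3 * b) + 16 * b ^ 2 := by ring
  have e3 : 0 ≤ a ^ 3 * b := by positivity
  have e4 : 0 ≤ a ^ 6 := by positivity
  have e5 : (a ^ 2) ^ 3 = a ^ 6 := by ring
  rw [e2, hbd]
  linarith

lemma l0_mul_le {m : ℕ} (D y : Fin m → ℝ) : l0 (fun k => D k * y k) ≤ l0 D := by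
  unfold l0
  refine Finset.card_le_card fun k hk => ?_
  simp only [Finset.mem_filter, Finset.mem_univ, true_and] at hk ⊢
  exact left_ne_zero_of_mul hk

/-- Claim 8.3, sign changes under perturbation of a Gaussian layer. -/
theorem statement12 :
    ∃ C c : ℝ, 0 < C ∧ 0 < c ∧
      ∀ (m : ℕ), 0 < m →
      ∀ δ₂ δinf : ℝ, 0 ≤ δ₂ → δ₂ ≤ C → 0 ≤ δinf → δinf ≤ 1 / (4 * Real.sqrt m) →
      ∀ h0 : Fin m → ℝ, l2 h0 = 1 →
        ENNReal.ofReal (1 - Real.exp (-(c * (m : ℝ) ^ ((3 : ℝ) / 2) * δinf))) ≤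
          gaussMat m m (2 / m)
            {W | ∀ g' g1 g2 : Fin m → ℝ, g' = g1 + g2 → l2 g1 ≤ δ₂ → linf g2 ≤ δinf →
              (l0 (fun k => (signOf (fun k' => mulVec W h0 k' + g' k')) k -
                    signOf (mulVec W h0) k) : ℝ) ≤
                  C * ((m : ℝ) * δ₂ ^ ((2 : ℝ) / 3) + δinf * (m : ℝ) ^ ((3 : ℝ) / 2)) ∧
              l0 (fun k => ((signOf (fun k' => mulVec W h0 k' + g' k')) k -
                      signOf (mulVec W h0) k) * (mulVec W h0 k + g' k)) ≤
                l0 (fun k => (signOf (fun k' => mulVec W h0 k' + g' k')) k -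
                    signOf (mulVec W h0) k) ∧
              l2 (fun k => ((signOf (fun k' => mulVec W h0 k' + g' k')) k -
                      signOf (mulVec W h0) k) * (mulVec W h0 k + g' k)) ≤
                C * (δ₂ + δinf ^ ((3 : ℝ) / 2) * (m : ℝ) ^ ((3 : ℝ) / 4))} := by
  refine ⟨4, 1, by norm_num, by norm_num, ?_⟩
  intro m hm δ₂ δinf h2 _ hinf _ h0 hh0
  have hm' : (0 : ℝ) < m := by exact_mod_cast hm
  set a : ℝ := δ₂ ^ ((1 : ℝ) / 3) with ha
  set r : ℝ := √m with hr
  set b : ℝ := δinf ^ ((3 : ℝ) / 2) * (m : ℝ) ^ ((3 : ℝ) / 4) with hb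
  have ha0 : 0 ≤ a := by positivity
  have hr0 : 0 < r := by positivity
  have hb0 : 0 ≤ b := by positivity
  have hr2 : r ^ 2 = m := Real.sq_sqrt hm'.le
  have hr3 : (m : ℝ) ^ ((3 : ℝ) / 2) = r ^ 3 := by
    rw [hr, Real.sqrt_eq_rpow, ← Real.rpow_natCast, ← Real.rpow_mul hm'.le]
    norm_num
  have ha2 : δ₂ ^ ((2 : ℝ) / 3) = a ^ 2 := by
    rw [ha, ← Real.rpow_natCast, ← Real.rpow_mul h2]
    norm_num
  have ha3 : a ^ 3 = δ₂ := by
    rw [ha, ← Real.rpow_natCast, ← Real.rpow_mul h2]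
    norm_num
  have hbd : b ^ 2 = (δinf * r) ^ 3 := by
    rw [hb, mul_pow, mul_pow, ← hr3, ← Real.rpow_natCast, ← Real.rpow_natCast (_ ^ _),
      ← Real.rpow_mul hinf, ← Real.rpow_mul hm'.le, ← Real.rpow_natCast δinf]
    norm_num
  have hhs : ∑ j, h0 j ^ 2 = 1 := by
    simpa [l2, Real.sqrt_eq_one] using hh0
  set t : ℝ := a ^ 2 / r + δinf with ht
  have ht0 : 0 ≤ t := by positivity
  set q : ℝ := t * r with hq
  have hmq : m * q = r ^ 2 * a ^ 2 + δinf * r ^ 3 := by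
    rw [hq, ht, ← hr2]; field_simp
  set P : Measure (Fin m → ℝ) := Measure.pi fun _ => gaussianReal 0 (2 / m) with hP
  set Bad : Set (Fin m → ℝ) :=
    {g | 3 * (m * q) ≤ ((Finset.univ.filter fun k => |g k| ≤ t).card : ℝ)} with hBad
  have hBadm : MeasurableSet Bad := by
    have hc : ∀ g : Fin m → ℝ, ((Finset.univ.filter fun k => |g k| ≤ t).card : ℝ) =
        ∑ k, if |g k| ≤ t then (1 : ℝ) else 0 := fun g => by simp
    simp only [hBad, hc]
    refine measurableSet_le measurable_const (Finset.measurable_sum _ fun k _ => ?_)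
    exact Measurable.ite (measurableSet_le (by fun_prop) (by fun_prop)) measurable_const
      measurable_const
  have hbadP : P.real Bad ≤ Real.exp (-(m * q)) :=
    chernoff_count _ (gaussian_small_ball hm ht0)
  have hgoodP : 1 - Real.exp (-(m * q)) ≤ P.real Badᶜ := by
    rw [probReal_compl_eq_one_sub hBadm]; linarith
  have hmeasV : Measurable fun W : Fin m → Fin m → ℝ => mulVec W h0 := by
    unfold mulVec; fun_prop
  have hexp : 1 - Real.exp (-(1 * (m : ℝ) ^ ((3 : ℝ) / 2) * δinf)) ≤
      1 - Real.exp (-(m * q)) := by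
    have : Real.exp (-(m * q)) ≤ Real.exp (-(1 * (m : ℝ) ^ ((3 : ℝ) / 2) * δinf)) := by
      rw [Real.exp_le_exp, hmq, hr3]
      have : 0 ≤ r ^ 2 * a ^ 2 := by positivity
      linarith
    linarith
  calc _ ≤ ENNReal.ofReal (P.real Badᶜ) := ENNReal.ofReal_le_ofReal (hexp.trans hgoodP)
    _ = P Badᶜ := ofReal_measureReal
    _ = gaussMat m m (2 / m) ((fun W => mulVec W h0) ⁻¹' Badᶜ) := by
      rw [hP, ← map_mulVec_gaussMat _ h0 hhs, Measure.map_apply hmeasV hBadm.compl]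
    _ ≤ _ := by
      refine measure_mono fun W hW => ?_
      intro g' g1 g2 hg hg1 hg2
      subst hg
      have hg2' : ∀ k, |g2 k| ≤ δinf := fun k =>
        (le_ciSup (f := fun k => |g2 k|) (Set.finite_range _).bddAbove k).trans hg2
      have hg1' : ∑ k, g1 k ^ 2 ≤ a ^ 6 := by
        have := (Real.sqrt_le_left h2).mp hg1
        rw [← ha3] at this
        calc _ ≤ _ := this
          _ = _ := by ring
      have hN : ((Finset.univ.filter fun k => |mulVec W h0 k| ≤ t).card : ℝ) ≤
          3 * (r ^ 2 * a ^ 2 + δinf * r ^ 3) := by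
        rw [← hmq]
        have hW' : ¬ 3 * (m * q) ≤
            ((Finset.univ.filter fun k => |mulVec W h0 k| ≤ t).card : ℝ) := hW
        exact (not_le.mp hW').le
      obtain ⟨c1, c2⟩ :=
        sign_change_bounds ha0 hr0 hinf hb0 hbd (mulVec W h0) g1 g2 hg1' hg2' hN
      refine ⟨?_, l0_mul_le _ _, ?_⟩
      · rw [ha2, hr3, ← hr2]; exact c1
      · rw [← ha3]; exact c2

end DNNPaper
end
end
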